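/- arXiv:1203.1955 — 4 statements merged into one kernel-verified Lean document; each statement's English description precedes it below -/
import Mathlib

section
/- Let R be a commutative noetherian local ring, M a finitely generated R-module, a an element of R, n an integer and t a nonnegative integer. Suppose that a·Tor_n^R(M,X) = 0 and a·Tor_{n-1}^R(M,X) = 0 for every finitely generated R-module X whose dimension is at most t. Then a²·Tor_n^R(M,X) = 0 for every finitely generated R-module X whose dimension is at most t+1. -/
open CategoryTheory IsLocalRing

noncomputable section

/-- The `i`-th Tor module of two `R`-modules, as an object of `ModuleCat R`. -/
def TorMod (R : Type) [CommRing R] (i : ℕ) (M N : ModuleCat.{0} R) : ModuleCat.{0} R :=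
  ((Tor (ModuleCat.{0} R) i).obj M).obj N

/-- The `i`-th Ext module of two `R`-modules, as an object of `ModuleCat R`. -/
def ExtMod (R : Type) [CommRing R] (i : ℕ) (M N : ModuleCat.{0} R) : ModuleCat.{0} R :=
  ((Ext R (ModuleCat.{0} R) i).obj (Opposite.op M)).obj N

/-- Integer-indexed Tor: `Tor_n = 0` for `n < 0`. -/
def TorZ (R : Type) [CommRing R] (n : ℤ) (M N : ModuleCat.{0} R) : ModuleCat.{0} R :=
  if 0 ≤ n then TorMod R n.toNat M N else ModuleCat.of R PUnit

/-- Integer-indexed Ext: `Ext^n = 0` for `n < 0`. -/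
def ExtZ (R : Type) [CommRing R] (n : ℤ) (M N : ModuleCat.{0} R) : ModuleCat.{0} R :=
  if 0 ≤ n then ExtMod R n.toNat M N else ModuleCat.of R PUnit

/-- The depth of a module `N` over a local ring `S`, defined as the infimum of the set of
integers `i` such that `Ext^i(k, N) ≠ 0`, where `k` is the residue field of `S`
(`⊤` if no such `i` exists). -/
def moduleDepth (S : Type) [CommRing S] [IsLocalRing S] (N : Type) [AddCommGroup N]
    [Module S N] : ℕ∞ :=
  sInf {i : ℕ∞ | ∃ j : ℕ, i = (j : ℕ∞) ∧
    Nontrivial (ExtMod S j (ModuleCat.of S (ResidueField S)) (ModuleCat.of S N))}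

/-- A local ring is regular if it is noetherian and its maximal ideal can be generated by
(Krull dimension of `S`)-many elements. -/
def IsRegularLocal (S : Type) [CommRing S] [IsLocalRing S] : Prop :=
  IsNoetherianRing S ∧ ∃ s : Finset S, Ideal.span (s : Set S) = maximalIdeal S ∧
    (s.card : WithBot ℕ∞) = ringKrullDim S

/-- A local ring is Cohen-Macaulay if its depth (as a module over itself) equals its
Krull dimension. -/
def IsCMLocalRing (R : Type) [CommRing R] [IsLocalRing R] : Prop :=
  (moduleDepth R R : WithBot ℕ∞) = ringKrullDim R

/-- A module `M` over a local ring `R` is maximal Cohen-Macaulay if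
`depth M_p ≥ dim R_p` for every prime ideal `p` of `R`. -/
def IsMCMModule (R : Type) [CommRing R] [IsLocalRing R] (M : Type) [AddCommGroup M]
    [Module R M] : Prop :=
  ∀ (p : Ideal R) [p.IsPrime],
    ringKrullDim (Localization.AtPrime p) ≤
      (moduleDepth (Localization.AtPrime p) (LocalizedModule p.primeCompl M) : WithBot ℕ∞)

/-- Membership in `CM(R)`: finitely generated maximal Cohen-Macaulay modules. -/
def MemCM (R : Type) [CommRing R] [IsLocalRing R] (M : ModuleCat.{0} R) : Prop :=
  Module.Finite R M ∧ IsMCMModule R M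

/-- Membership in `CM₀(R)`: finitely generated maximal Cohen-Macaulay modules that are
locally free on the punctured spectrum. -/
def MemCM0 (R : Type) [CommRing R] [IsLocalRing R] (M : ModuleCat.{0} R) : Prop :=
  Module.Finite R M ∧ IsMCMModule R M ∧
    ∀ (p : Ideal R) [p.IsPrime], p ≠ maximalIdeal R →
      Module.Free (Localization.AtPrime p) (LocalizedModule p.primeCompl M)

/-- The singular locus of `R`: primes `p` such that `R_p` is not regular. -/
def singularLocus (R : Type) [CommRing R] : Set (PrimeSpectrum R) :=
  {p | ¬ IsRegularLocal (Localization.AtPrime p.asIdeal)}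

/-- The nonfree locus of a module `M`: primes `p` such that `M_p` is not a free
`R_p`-module. -/
def nonfreeLocus (R : Type) [CommRing R] (M : Type) [AddCommGroup M] [Module R M] :
    Set (PrimeSpectrum R) :=
  {p | ¬ Module.Free (Localization.AtPrime p.asIdeal)
        (LocalizedModule p.asIdeal.primeCompl M)}

/-- `K` is a first syzygy of `N` in a minimal free resolution: there is a surjection
`f : R^n → N` with `ker f ⊆ m·R^n` and `K ≅ ker f`. -/
def IsMinimalSyzygy1 (R : Type) [CommRing R] [IsLocalRing R] (N K : ModuleCat.{0} R) : Prop :=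
  ∃ (n : ℕ) (f : (Fin n → R) →ₗ[R] N), Function.Surjective f ∧
    LinearMap.ker f ≤ (maximalIdeal R) • (⊤ : Submodule R (Fin n → R)) ∧
    Nonempty (K ≃ₗ[R] LinearMap.ker f)

/-- `K` is a `d`-th syzygy of `N` in a minimal free resolution. -/
def IsMinimalSyzygy (R : Type) [CommRing R] [IsLocalRing R] :
    ℕ → ModuleCat.{0} R → ModuleCat.{0} R → Prop
  | 0, N, K => Nonempty ((K : Type) ≃ₗ[R] N)
  | d + 1, N, K => ∃ L : ModuleCat.{0} R, IsMinimalSyzygy1 R N L ∧ IsMinimalSyzygy R d L K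

/-- A module is indecomposable if it is nonzero and is not isomorphic to the direct sum of
two nonzero modules. -/
def IndecomposableModule (R : Type) [CommRing R] (M : Type) [AddCommGroup M] [Module R M] :
    Prop :=
  Nontrivial M ∧ ∀ (A B : Type) [AddCommGroup A] [Module R A] [AddCommGroup B] [Module R B],
    Nonempty (M ≃ₗ[R] A × B) → (Subsingleton A ∨ Subsingleton B)

section Helpers
open CategoryTheory.Limits
open scoped ZeroObject

section Horseshoe
variable {C : Type*} [Category C] [Abelian C]

def shX (A : ChainComplex C ℕ) : ℕ → C
  | 0 => 0
  | n + 1 => A.X n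

def shD (A : ChainComplex C ℕ) : (n : ℕ) → (A.X n ⟶ shX A n)
  | 0 => 0
  | n + 1 => A.d (n + 1) n

def shTop (A : ChainComplex C ℕ) (n : ℕ) : shX A (n + 1) ⟶ A.X n := 𝟙 (A.X n)

def shTopInv (A : ChainComplex C ℕ) (n : ℕ) : A.X n ⟶ shX A (n + 1) := 𝟙 (A.X n)

@[simp] lemma shTop_inv (A : ChainComplex C ℕ) (n : ℕ) : shTopInv A n ≫ shTop A n = 𝟙 _ :=
  Category.id_comp _
@[simp] lemma shInv_top (A : ChainComplex C ℕ) (n : ℕ) : shTop A n ≫ shTopInv A n = 𝟙 _ :=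
  Category.id_comp _
@[simp] lemma shD_top (A : ChainComplex C ℕ) (n : ℕ) : shD A (n + 1) ≫ shTop A n = A.d (n + 1) n :=
  Category.comp_id _
@[simp] lemma d_shD (A : ChainComplex C ℕ) (n : ℕ) : A.d (n + 1) n ≫ shD A n = 0 := by
  cases n with
  | zero => simp [shD]
  | succ n => exact A.d_comp_d _ _ _

/-- A contractible complex containing `A`. -/
def discC (A : ChainComplex C ℕ) : ChainComplex C ℕ :=
  ChainComplex.of (fun n => A.X n ⊞ shX A n)
    (fun n => biprod.snd ≫ shTop A n ≫ biprod.inl) (by intro n; simp)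

lemma discC_d (A : ChainComplex C ℕ) (n : ℕ) :
    (discC A).d (n + 1) n = (biprod.snd ≫ shTop A n ≫ biprod.inl :
      A.X (n + 1) ⊞ shX A (n + 1) ⟶ A.X n ⊞ shX A n) :=
  ChainComplex.of_d (fun n => A.X n ⊞ shX A n)
    (fun n => biprod.snd ≫ shTop A n ≫ biprod.inl) n

def discIn (A : ChainComplex C ℕ) : A ⟶ discC A where
  f n := (biprod.lift (𝟙 _) (shD A n) : A.X n ⟶ A.X n ⊞ shX A n)
  comm' i j hij := by
    obtain rfl : j + 1 = i := hij
    rw [discC_d]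
    refine biprod.hom_ext _ _ ?_ ?_ <;> simp [discC]

def discRet (A : ChainComplex C ℕ) (n : ℕ) : (discC A).X n ⟶ A.X n :=
  (biprod.fst : A.X n ⊞ shX A n ⟶ A.X n)

lemma discIn_ret (A : ChainComplex C ℕ) (n : ℕ) : (discIn A).f n ≫ discRet A n = 𝟙 _ := by
  exact biprod.lift_fst _ _

def discH (A : ChainComplex C ℕ) (n : ℕ) : (discC A).X n ⟶ (discC A).X (n + 1) :=
  (biprod.fst ≫ shTopInv A n ≫ biprod.inr : A.X n ⊞ shX A n ⟶ A.X (n + 1) ⊞ shX A (n + 1))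

lemma discH0 (A : ChainComplex C ℕ) : 𝟙 ((discC A).X 0) = discH A 0 ≫ (discC A).d 1 0 := by
  rw [discC_d A 0]
  change 𝟙 (A.X 0 ⊞ shX A 0) = (biprod.fst ≫ shTopInv A 0 ≫ biprod.inr) ≫ biprod.snd ≫ shTop A 0 ≫ biprod.inl
  have : (biprod.snd : A.X 0 ⊞ shX A 0 ⟶ shX A 0) = 0 := (isZero_zero C).eq_of_tgt _ _
  rw [← biprod.total, this]
  simp only [Category.assoc, biprod.inr_snd_assoc, zero_comp, add_zero]
  rw [← Category.assoc (shTopInv A 0), shTop_inv, Category.id_comp]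

lemma discHS (A : ChainComplex C ℕ) (n : ℕ) : 𝟙 ((discC A).X (n+1)) =
   (discC A).d (n+1) n ≫ discH A n + discH A (n+1) ≫ (discC A).d (n+2) (n+1) := by
  rw [discC_d A n, discC_d A (n+1)]
  change 𝟙 (A.X (n+1) ⊞ shX A (n+1)) = (biprod.snd ≫ shTop A n ≫ biprod.inl) ≫ 
    (biprod.fst ≫ shTopInv A n ≫ biprod.inr) +
    (biprod.fst ≫ shTopInv A (n+1) ≫ biprod.inr) ≫ biprod.snd ≫ shTop A (n+1) ≫ biprod.inl
  rw [← biprod.total]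
  simp only [Category.assoc, biprod.inl_fst_assoc, biprod.inr_snd_assoc]
  rw [← Category.assoc (shTop A n), shInv_top, ← Category.assoc (shTopInv A (n + 1)), shTop_inv,
    Category.id_comp, Category.id_comp]
  exact add_comm _ _

def discHom (A : ChainComplex C ℕ) : Homotopy (𝟙 (discC A)) 0 where
  hom i j := if h : i + 1 = j then discH A i ≫ eqToHom (by rw [h]) else 0
  zero i j h := dif_neg h
  comm i := by
    rw [Homotopy.prevD_chainComplex]
    cases i with
    | zero =>
      rw [Homotopy.dNext_zero_chainComplex]
      simpa using discH0 A
    | succ i =>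
      rw [Homotopy.dNext_succ_chainComplex]
      simpa using discHS A i

instance shX_proj (A : ChainComplex C ℕ) [∀ n, Projective (A.X n)] (n : ℕ) :
    Projective (shX A n) := by
  cases n with
  | zero => exact inferInstanceAs (Projective (0 : C))
  | succ n => exact inferInstanceAs (Projective (A.X n))

instance discC_proj (A : ChainComplex C ℕ) [∀ n, Projective (A.X n)] (n : ℕ) :
    Projective ((discC A).X n) :=
  inferInstanceAs (Projective (A.X n ⊞ shX A n))

def biprodHE (P A : ChainComplex C ℕ) : HomotopyEquiv (P ⊞ discC A) P where
  hom := biprod.fst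
  inv := biprod.inl
  homotopyInvHomId := Homotopy.ofEq (by simp)
  homotopyHomInvId := by
    have h1 : Homotopy ((biprod.snd : P ⊞ discC A ⟶ _) ≫ 𝟙 _ ≫ (biprod.inr : _ ⟶ P ⊞ discC A))
        (biprod.snd ≫ 0 ≫ biprod.inr) :=
      ((discHom A).compRight biprod.inr).compLeft biprod.snd
    have h2 := (Homotopy.refl ((biprod.fst : P ⊞ discC A ⟶ P) ≫ biprod.inl)).add h1
    refine ((Homotopy.ofEq ?_).trans h2.symm).trans (Homotopy.ofEq ?_)
    · simp
    · simp

def bigRes {X : C} (P : ProjectiveResolution X) (A : ChainComplex C ℕ)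
    [∀ n, Projective (A.X n)] : ProjectiveResolution X where
  complex := P.complex ⊞ discC A
  projective n := Projective.of_iso (HomologicalComplex.biprodXIso _ _ n).symm inferInstance
  π := biprod.fst ≫ P.π
  quasiIso := by
    have : QuasiIso (biprod.fst : P.complex ⊞ discC A ⟶ P.complex) :=
      inferInstanceAs (QuasiIso (biprodHE P.complex A).hom)
    infer_instance

def bigIn (P A : ChainComplex C ℕ) (φ : A ⟶ P) : A ⟶ P ⊞ discC A :=
  biprod.lift φ (discIn A)

def bigRet (P A : ChainComplex C ℕ) (n : ℕ) : (P ⊞ discC A).X n ⟶ A.X n :=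
  (biprod.snd : P ⊞ discC A ⟶ _).f n ≫ discRet A n

lemma bigIn_ret (P A : ChainComplex C ℕ) (φ : A ⟶ P) (n : ℕ) :
    (bigIn P A φ).f n ≫ bigRet P A n = 𝟙 _ := by
  rw [bigRet, ← Category.assoc, ← HomologicalComplex.comp_f, bigIn, biprod.lift_snd, discIn_ret]

instance bigIn_mono (P A : ChainComplex C ℕ) (φ : A ⟶ P) : Mono (bigIn P A φ) := by
  have : ∀ n, Mono ((bigIn P A φ).f n) := fun n => by
    have : Mono ((bigIn P A φ).f n ≫ bigRet P A n) := by rw [bigIn_ret]; infer_instance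
    exact mono_of_mono _ (bigRet P A n)
  exact HomologicalComplex.mono_of_mono_f _ this

def bigS (P A : ChainComplex C ℕ) (φ : A ⟶ P) : ShortComplex (ChainComplex C ℕ) :=
  ShortComplex.mk (bigIn P A φ) (cokernel.π _) (cokernel.condition _)

lemma bigS_exact (P A : ChainComplex C ℕ) (φ : A ⟶ P) : (bigS P A φ).ShortExact where
  exact := ShortComplex.exact_cokernel _
  mono_f := bigIn_mono P A φ
  epi_g := by dsimp [bigS]; infer_instance

def bigSplit (P A : ChainComplex C ℕ) (φ : A ⟶ P) (n : ℕ) :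
    ((bigS P A φ).map (HomologicalComplex.eval C _ n)).Splitting :=
  have h := (HomologicalComplex.shortExact_iff_degreewise_shortExact _).1 (bigS_exact P A φ) n
  have := h.epi_g
  ShortComplex.Splitting.ofExactOfRetraction _ h.exact (bigRet P A n) (bigIn_ret P A φ n) h.epi_g

lemma single_exact {S : ShortComplex C} (hS : S.ShortExact) :
    (S.map (ChainComplex.single₀ C)).ShortExact :=
  hS.map_of_exact (HomologicalComplex.single C (ComplexShape.down ℕ) 0)

section
variable {S : ShortComplex C} (PL : ProjectiveResolution S.X₁)
    (PX : ProjectiveResolution S.X₂) (φ : PL.complex ⟶ PX.complex)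
    (w : φ ≫ PX.π = PL.π ≫ (ChainComplex.single₀ C).map S.f)

include w in
lemma bigIn_π : bigIn PX.complex PL.complex φ ≫ (bigRes PX PL.complex).π =
    PL.π ≫ (ChainComplex.single₀ C).map S.f := by
  rw [← w]
  exact biprod.lift_fst_assoc _ _ _

include w in
lemma quot_aux : bigIn PX.complex PL.complex φ ≫
    (show PX.complex ⊞ discC PL.complex ⟶ _ from
      (bigRes PX PL.complex).π ≫ (ChainComplex.single₀ C).map S.g) = 0 := by
  have h := congrArg (· ≫ (ChainComplex.single₀ C).map S.g) (bigIn_π PL PX φ w)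
  refine Eq.trans (Category.assoc _ _ _).symm (h.trans ?_)
  simp only [Category.assoc, ← Functor.map_comp, S.zero]
  simp

def quotπ : (bigS PX.complex PL.complex φ).X₃ ⟶ (ChainComplex.single₀ C).obj S.X₃ :=
  cokernel.desc _ (show PX.complex ⊞ discC PL.complex ⟶ _ from
    (bigRes PX PL.complex).π ≫ (ChainComplex.single₀ C).map S.g) (quot_aux PL PX φ w)

lemma quotπ_comm : (bigS PX.complex PL.complex φ).g ≫ quotπ PL PX φ w =
    (bigRes PX PL.complex).π ≫ (ChainComplex.single₀ C).map S.g :=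
  cokernel.π_desc _ _ _

def quotRes (hS : S.ShortExact) : ProjectiveResolution S.X₃ where
  complex := (bigS PX.complex PL.complex φ).X₃
  projective n := by
    have s := bigSplit PX.complex PL.complex φ n
    exact Retract.projective (p := (bigRes PX PL.complex).projective n) ⟨s.s, _, s.s_g⟩
  π := quotπ PL PX φ w
  quasiIso := by
    let τ : bigS PX.complex PL.complex φ ⟶ S.map (ChainComplex.single₀ C) :=
      { τ₁ := PL.π
        τ₂ := (bigRes PX PL.complex).π
        τ₃ := quotπ PL PX φ w
        comm₁₂ := (bigIn_π PL PX φ w).symm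
        comm₂₃ := (quotπ_comm PL PX φ w).symm }
    exact HomologicalComplex.HomologySequence.quasiIso_τ₃ τ (bigS_exact _ _ φ) (single_exact hS)
      PL.quasiIso (bigRes PX PL.complex).quasiIso

end

lemma f0_comm {K L : ChainComplex C ℕ} {X Y : C} (φ : K ⟶ L)
    (p : K ⟶ (ChainComplex.single₀ C).obj X) (q : L ⟶ (ChainComplex.single₀ C).obj Y) (f : X ⟶ Y)
    (h : φ ≫ q = p ≫ (ChainComplex.single₀ C).map f) : φ.f 0 ≫ q.f 0 = p.f 0 ≫ f := by
  have := congrArg (fun t : K ⟶ (ChainComplex.single₀ C).obj Y => t.f 0) h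
  simpa using this

variable [HasProjectiveResolutions C] {D : Type*} [Category D] [Abelian D]

theorem leftDerived_les {S : ShortComplex C} (hS : S.ShortExact) (F : C ⥤ D) [F.Additive] (n : ℕ) :
    (∃ h : (F.leftDerived n).map S.f ≫ (F.leftDerived n).map S.g = 0,
      (ShortComplex.mk _ _ h).Exact) ∧
    ∃ (δ : (F.leftDerived (n + 1)).obj S.X₃ ⟶ (F.leftDerived n).obj S.X₁)
      (h : (F.leftDerived (n + 1)).map S.g ≫ δ = 0), (ShortComplex.mk _ δ h).Exact := by
  let PL := projectiveResolution S.X₁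
  let PX := projectiveResolution S.X₂
  let φ := ProjectiveResolution.lift S.f PL PX
  have w : φ ≫ PX.π = PL.π ≫ (ChainComplex.single₀ C).map S.f :=
    ProjectiveResolution.lift_commutes _ _ _
  let PB := bigRes PX PL.complex
  let PQ := quotRes PL PX φ w hS
  let T := (bigS PX.complex PL.complex φ).map (F.mapHomologicalComplex (ComplexShape.down ℕ))
  have hT : T.ShortExact := by
    apply HomologicalComplex.shortExact_of_degreewise_shortExact
    intro i
    exact ((bigSplit PX.complex PL.complex φ i).map F).shortExact
  let e1 : ∀ n, (F.leftDerived n).obj S.X₁ ≅ T.X₁.homology n := fun n => PL.isoLeftDerivedObj F n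
  let e2 : ∀ n, (F.leftDerived n).obj S.X₂ ≅ T.X₂.homology n := fun n => PB.isoLeftDerivedObj F n
  let e3 : ∀ n, (F.leftDerived n).obj S.X₃ ≅ T.X₃.homology n := fun n => PQ.isoLeftDerivedObj F n
  have c1 : ∀ n, (F.leftDerived n).map S.f ≫ (e2 n).hom =
      (e1 n).hom ≫ HomologicalComplex.homologyMap T.f n := fun n =>
    ProjectiveResolution.isoLeftDerivedObj_hom_naturality S.f PL PB (bigIn PX.complex PL.complex φ)
      (f0_comm _ _ _ _ (bigIn_π PL PX φ w)) F n
  have c2 : ∀ n, (F.leftDerived n).map S.g ≫ (e3 n).hom =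
      (e2 n).hom ≫ HomologicalComplex.homologyMap T.g n := fun n =>
    ProjectiveResolution.isoLeftDerivedObj_hom_naturality S.g PB PQ (bigS PX.complex PL.complex φ).g
      (f0_comm _ _ _ _ (quotπ_comm PL PX φ w)) F n
  clear_value e1 e2 e3 T
  constructor
  · have h0 : (F.leftDerived n).map S.f ≫ (F.leftDerived n).map S.g = 0 := by
      rw [← cancel_mono (e3 n).hom, Category.assoc, c2, ← Category.assoc, c1, Category.assoc,
        ← HomologicalComplex.homologyMap_comp, T.zero]
      simp
    refine ⟨h0, (ShortComplex.exact_iff_of_iso (ShortComplex.isoMk (e1 n) (e2 n) (e3 n) ?_ ?_)).2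
      (hT.homology_exact₂ n)⟩
    · exact (c1 n).symm
    · exact (c2 n).symm
  · have hrel : (ComplexShape.down ℕ).Rel (n + 1) n := rfl
    refine ⟨(e3 (n+1)).hom ≫ hT.δ (n+1) n hrel ≫ (e1 n).inv, ?_, ?_⟩
    · rw [← Category.assoc, c2 (n+1), Category.assoc, ← Category.assoc (HomologicalComplex.homologyMap _ _),
        hT.comp_δ]
      simp
    · refine (ShortComplex.exact_iff_of_iso (ShortComplex.isoMk (e2 (n+1))
        (e3 (n+1)) (e1 n) ?_ ?_)).2 (hT.homology_exact₃ (n+1) n hrel)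
      · exact (c2 (n+1)).symm
      · simp

end Horseshoe

section TorPart
variable {R : Type} [CommRing R]

def torMap (n : ℕ) (M : ModuleCat.{0} R) {X Y : ModuleCat.{0} R} (f : X ⟶ Y) :
    TorMod R n M X →ₗ[R] TorMod R n M Y :=
  (((Tor (ModuleCat.{0} R) n).obj M).map f).hom

lemma torMap_smul (n : ℕ) (M X : ModuleCat.{0} R) (r : R) (x : TorMod R n M X) :
    torMap n M (r • 𝟙 X) x = r • x := by
  let F := (MonoidalCategory.tensoringLeft (ModuleCat.{0} R)).obj M
  have : F.Linear R := ⟨fun f r => MonoidalLinear.whiskerLeft_smul _ _ _⟩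
  let P := projectiveResolution X
  have h := F.leftDerived_map_eq n (r • 𝟙 X) (P := P) (Q := P) (r • 𝟙 P.complex) (by
    have hs : (ChainComplex.single₀ (ModuleCat.{0} R)).map (r • 𝟙 X) = r • 𝟙 _ := by
      apply HomologicalComplex.to_single_hom_ext
      rw [HomologicalComplex.smul_f_apply, HomologicalComplex.id_f]
      exact ChainComplex.single₀_map_f_zero (r • 𝟙 X)
    rw [Linear.smul_comp, Category.id_comp, hs, Linear.comp_smul, Category.comp_id])
  have h' : (F.leftDerived n).map (r • 𝟙 X) = r • 𝟙 _ := by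
    rw [h]
    have : (F.mapHomologicalComplex (ComplexShape.down ℕ) ⋙ HomologicalComplex.homologyFunctor _ _ n).map (r • 𝟙 P.complex) = r • 𝟙 _ := by
      rw [Functor.comp_map, Functor.map_smul, CategoryTheory.Functor.map_id]
      refine (ShortComplex.homologyMap_smul (𝟙 _) r).trans ?_
      rw [ShortComplex.homologyMap_id]
      rfl
    rw [this]
    simp
  exact congrArg (fun t => t.hom x) h'

lemma tor_exact (n : ℕ) (M : ModuleCat.{0} R) {X Y Z : ModuleCat.{0} R} (f : X ⟶ Y) (g : Y ⟶ Z)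
    (hf : Function.Injective f) (hg : Function.Surjective g) (hfg : Function.Exact f g) :
    Function.Exact (torMap n M f) (torMap n M g) ∧
    ∃ δ : TorMod R (n + 1) M Z →ₗ[R] TorMod R n M X, Function.Exact (torMap (n + 1) M g) δ := by
  have h0 : f ≫ g = 0 := by
    ext x; exact hfg.apply_apply_eq_zero x
  let S := ShortComplex.mk f g h0
  have hS : S.ShortExact :=
    { exact := (ShortComplex.ShortExact.moduleCat_exact_iff_function_exact S).2 hfg
      mono_f := (ModuleCat.mono_iff_injective _).2 hf
      epi_g := (ModuleCat.epi_iff_surjective _).2 hg }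
  obtain ⟨⟨h1, h2⟩, δ, h3, h4⟩ := leftDerived_les hS
    ((MonoidalCategory.tensoringLeft (ModuleCat.{0} R)).obj M) n
  exact ⟨(ShortComplex.ShortExact.moduleCat_exact_iff_function_exact _).1 h2, δ.hom,
    (ShortComplex.ShortExact.moduleCat_exact_iff_function_exact _).1 h4⟩

lemma tor_finite [IsNoetherianRing R] (n : ℕ) (M : ModuleCat.{0} R) [Module.Finite R M] :
    ∀ X : ModuleCat.{0} R, Module.Finite R X → Module.Finite R (TorMod R n M X) := by
  induction n with
  | zero =>
    intro X hX
    let F := (MonoidalCategory.tensoringLeft (ModuleCat.{0} R)).obj M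
    have : PreservesFiniteColimits F :=
      inferInstanceAs (PreservesFiniteColimits (MonoidalCategory.tensorLeft M))
    have e : TorMod R 0 M X ≅ F.obj X := F.leftDerivedZeroIsoSelf.app X
    have : Module.Finite R (F.obj X) := inferInstanceAs (Module.Finite R (TensorProduct R M X))
    exact Module.Finite.equiv e.toLinearEquiv.symm
  | succ n ih =>
    intro X hX
    obtain ⟨k, f, hf⟩ := Module.Finite.exists_fin' R X
    have := ih (ModuleCat.of R (LinearMap.ker f)) inferInstance
    obtain ⟨-, δ, hδ⟩ := tor_exact n M (ModuleCat.ofHom (LinearMap.ker f).subtype)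
      (ModuleCat.ofHom f) (Submodule.injective_subtype _) hf (LinearMap.exact_subtype_ker_map f)
    have hz : IsZero (TorMod R (n + 1) M (ModuleCat.of R (Fin k → R))) :=
      have : Projective (ModuleCat.of R (Fin k → R)) :=
        (IsProjective.iff_projective (Fin k → R)).1 inferInstance
      isZero_Tor_succ_of_projective (ModuleCat.{0} R) M (ModuleCat.of R (Fin k → R)) n
    have hs := ModuleCat.subsingleton_of_isZero hz
    refine Module.Finite.of_injective δ ((injective_iff_map_eq_zero _).2 fun x hx => ?_)
    obtain ⟨y, rfl⟩ := (hδ x).1 hx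
    rw [Subsingleton.elim y 0, map_zero]

end TorPart

lemma dim_drop {R : Type} [CommRing R] [IsNoetherianRing R] [IsLocalRing R] (I : Ideal R) (t : ℕ)
    (hI : ringKrullDim (R ⧸ I) ≤ ((t + 1 : ℕ) : WithBot ℕ∞)) :
    ∃ r ∈ maximalIdeal R, ∀ (J : Ideal R) (k : ℕ), I ≤ J → r ^ k ∈ J →
      ringKrullDim (R ⧸ J) ≤ (t : WithBot ℕ∞) := by
  classical
  have hfin : (I.minimalPrimes \ {maximalIdeal R}).Finite := (I.finite_minimalPrimes_of_isNoetherianRing R).sdiff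
  obtain ⟨r, hr, hr'⟩ : ∃ r ∈ maximalIdeal R, ∀ p ∈ I.minimalPrimes, p ≠ maximalIdeal R → r ∉ p := by
    by_contra! hcon
    have hsub : ((maximalIdeal R : Ideal R) : Set R) ⊆ ⋃ p ∈ (hfin.toFinset : Set (Ideal R)), (p : Set R) := by
      intro r hr
      obtain ⟨p, hp, hpm, hrp⟩ := hcon r hr
      simp only [Set.mem_iUnion]
      exact ⟨p, by simp [hp, hpm], hrp⟩
    obtain ⟨p, hp, hle⟩ := (Ideal.subset_union_prime (s := hfin.toFinset) (f := fun p => p) ⊥ ⊥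
      (by
        intro p hp _ _
        simp only [Set.Finite.mem_toFinset, Set.mem_sdiff] at hp
        exact hp.1.1.1)).1 hsub
    simp only [Set.Finite.mem_toFinset, Set.mem_sdiff, Set.mem_singleton_iff] at hp
    exact hp.2 ((maximalIdeal.isMaximal R).eq_of_le hp.1.1.1.ne_top hle).symm
  refine ⟨r, hr, fun J k hIJ hk => ?_⟩
  rw [ringKrullDim_quotient] at hI ⊢
  refine iSup_le fun s => ?_
  by_cases hl : s.length = 0
  · rw [hl]; exact_mod_cast Nat.zero_le t
  have hpos : 0 < s.length := Nat.pos_of_ne_zero hl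
  let p := s.head
  have hp : (p : PrimeSpectrum R).asIdeal ≠ maximalIdeal R := by
    intro h
    have h1 : s.head < s.last := s.strictMono (Fin.pos_iff_ne_zero.2 (by simpa [Fin.ext_iff] using hl))
    have h2 : (s.head : PrimeSpectrum R).asIdeal < (s.last : PrimeSpectrum R).asIdeal := h1
    exact absurd (le_maximalIdeal (s.last : PrimeSpectrum R).2.ne_top) (not_le_of_gt (h ▸ h2))
  have hJp : J ≤ (p : PrimeSpectrum R).asIdeal := p.2
  obtain ⟨q, hq, hqp⟩ := Ideal.exists_minimalPrimes_le (hIJ.trans hJp)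
  have hqne : q ≠ (p : PrimeSpectrum R).asIdeal := by
    intro h
    subst h
    exact hr' _ hq hp ((p : PrimeSpectrum R).2.mem_of_pow_mem _ (hJp hk))
  let ι : PrimeSpectrum.zeroLocus (J : Set R) → PrimeSpectrum.zeroLocus (I : Set R) :=
    fun x => ⟨x.1, fun a ha => x.2 (hIJ ha)⟩
  have hι : StrictMono ι := fun a b h => h
  let q' : PrimeSpectrum.zeroLocus (I : Set R) := ⟨⟨q, hq.1.1⟩, hq.1.2⟩
  let s' := (s.map ι hι).cons q' (by
    change q' < ι p
    exact lt_of_le_of_ne hqp (fun h => hqne (congrArg (fun x => x.1.asIdeal) h)))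
  have h3 := (Order.LTSeries.length_le_krullDim s').trans hI
  have h4 : s'.length = s.length + 1 := by simp [s']
  rw [h4] at h3
  norm_cast at h3 ⊢
  omega

lemma main_nat {R : Type} [CommRing R] [IsNoetherianRing R] [IsLocalRing R]
    (M : ModuleCat.{0} R) (hM : Module.Finite R M) (a : R) (n : ℕ) (t : ℕ)
    (h : ∀ X : ModuleCat.{0} R, Module.Finite R X →
        ringKrullDim (R ⧸ Module.annihilator R X) ≤ (t : WithBot ℕ∞) →
        ∀ x : TorMod R n M X, a • x = 0) (X : ModuleCat.{0} R) (hX : Module.Finite R X)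
    (hd : ringKrullDim (R ⧸ Module.annihilator R X) ≤ ((t + 1 : ℕ) : WithBot ℕ∞))
    (x : TorMod R n M X) : (a ^ 2) • x = 0 := by
  obtain ⟨r, hr, hdrop⟩ := dim_drop _ t hd
  let c : ℕ →o Submodule R X :=
    { toFun := fun i => Submodule.torsionBy R X (r ^ i)
      monotone' := fun i j hij y hy => by
        rw [Submodule.mem_torsionBy_iff] at hy ⊢
        obtain ⟨k, rfl⟩ := Nat.exists_eq_add_of_le hij
        rw [pow_add, mul_comm, mul_smul, hy, smul_zero] }
  obtain ⟨N, hN⟩ := monotone_stabilizes_iff_noetherian.mpr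
    (inferInstance : IsNoetherian R X) c
  let L : Submodule R X := c N
  have hLmem : ∀ y : X, y ∈ L ↔ r ^ N • y = 0 := fun y => Submodule.mem_torsionBy_iff _ _
  let Y := X ⧸ L
  have hinj : ∀ (k : ℕ) (y : Y), r ^ k • y = 0 → y = 0 := by
    intro k y hy
    obtain ⟨z, rfl⟩ := Submodule.Quotient.mk_surjective L y
    rw [← Submodule.Quotient.mk_smul, Submodule.Quotient.mk_eq_zero, hLmem, ← mul_smul,
      ← pow_add] at hy
    rw [Submodule.Quotient.mk_eq_zero]
    change z ∈ c N
    rw [hN (N + k) (Nat.le_add_right _ _)]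
    exact (Submodule.mem_torsionBy_iff _ _).2 hy
  have hannY : Module.annihilator R X ≤ Module.annihilator R Y :=
    L.mkQ.annihilator_le_of_surjective L.mkQ_surjective
  -- the torsion part
  have hTL : ∀ y : TorMod R n M (ModuleCat.of R L), a • y = 0 := by
    refine h _ (inferInstanceAs (Module.Finite R L)) (hdrop _ N ?_ ?_)
    · exact L.subtype.annihilator_le_of_injective L.injective_subtype
    · rw [Module.mem_annihilator]
      rintro ⟨y, hy⟩
      exact Subtype.ext ((hLmem y).1 hy)
  -- the torsion free part
  have hfinY : Module.Finite R (TorMod R n M (ModuleCat.of R Y)) :=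
    tor_finite n M _ (inferInstanceAs (Module.Finite R Y))
  have hTY : ∀ y : TorMod R n M (ModuleCat.of R Y), a • y = 0 := by
    intro y
    have hk : ∀ k : ℕ, ∃ z : TorMod R n M (ModuleCat.of R Y), r ^ k • z = a • y := by
      intro k
      let f : Y →ₗ[R] Y := r ^ k • LinearMap.id
      let Q := Y ⧸ LinearMap.range f
      have hQ : ∀ y : TorMod R n M (ModuleCat.of R Q), a • y = 0 := by
        refine h _ (inferInstanceAs (Module.Finite R Q)) (hdrop _ k (hannY.trans ?_) ?_)
        · exact (LinearMap.range f).mkQ.annihilator_le_of_surjective (Submodule.mkQ_surjective _)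
        · rw [Module.mem_annihilator]
          intro q
          obtain ⟨z, rfl⟩ := Submodule.Quotient.mk_surjective (LinearMap.range f) q
          rw [← Submodule.Quotient.mk_smul, Submodule.Quotient.mk_eq_zero]
          exact ⟨z, rfl⟩
      have hex := (tor_exact n M (X := ModuleCat.of R Y) (Y := ModuleCat.of R Y)
        (Z := ModuleCat.of R Q) (r ^ k • 𝟙 (ModuleCat.of R Y))
        (ModuleCat.ofHom (LinearMap.range f).mkQ)
        ((injective_iff_map_eq_zero (r ^ k • 𝟙 (ModuleCat.of R Y)).hom).2 fun y hy => hinj k y hy)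
        (Submodule.mkQ_surjective _) (LinearMap.exact_map_mkQ_range f)).1
      obtain ⟨z, hz⟩ := (hex (a • y)).1 (by rw [map_smul, hQ])
      rw [torMap_smul] at hz
      exact ⟨z, hz⟩
    have hkr := Ideal.iInf_pow_smul_eq_bot_of_isLocalRing
      (M := TorMod R n M (ModuleCat.of R Y)) (maximalIdeal R) (Ideal.IsPrime.ne_top inferInstance)
    rw [← Submodule.mem_bot R, ← hkr, Submodule.mem_iInf]
    intro k
    obtain ⟨z, hz⟩ := hk k
    rw [← hz]
    exact Submodule.smul_mem_smul (Ideal.pow_mem_pow hr k) trivial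
  have hex := (tor_exact n M (X := ModuleCat.of R L) (Y := X)
    (Z := ModuleCat.of R Y) (ModuleCat.ofHom L.subtype) (ModuleCat.ofHom L.mkQ)
    L.injective_subtype L.mkQ_surjective (LinearMap.exact_subtype_mkQ L)).1
  obtain ⟨z, hz⟩ := (hex (a • x)).1 (by rw [map_smul, hTY])
  rw [pow_two, mul_smul, ← hz, ← map_smul, hTL, map_zero]

end Helpers

/-- Let `R` be a commutative noetherian local ring, `M` a finitely generated
`R`-module, `a ∈ R`, `n` an integer and `t` a nonnegative integer. If `a · Tor_n(M,X) = 0` and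
`a · Tor_{n-1}(M,X) = 0` for every finitely generated `R`-module `X` of dimension at most `t`,
then `a² · Tor_n(M,X) = 0` for every finitely generated `R`-module `X` of dimension at most
`t + 1`. -/
theorem stmt0 (R : Type) [CommRing R] [IsNoetherianRing R] [IsLocalRing R]
    (M : ModuleCat.{0} R) (hM : Module.Finite R M) (a : R) (n : ℤ) (t : ℕ)
    (h : ∀ X : ModuleCat.{0} R, Module.Finite R X →
        ringKrullDim (R ⧸ Module.annihilator R X) ≤ (t : WithBot ℕ∞) →
        (∀ x : TorZ R n M X, a • x = 0) ∧ (∀ x : TorZ R (n - 1) M X, a • x = 0)) :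
    ∀ X : ModuleCat.{0} R, Module.Finite R X →
      ringKrullDim (R ⧸ Module.annihilator R X) ≤ ((t + 1 : ℕ) : WithBot ℕ∞) →
      ∀ x : TorZ R n M X, (a ^ 2) • x = 0 := by
  intro X hX hd
  by_cases hn : 0 ≤ n
  · obtain ⟨k, rfl⟩ := Int.eq_ofNat_of_zero_le hn
    have e : ∀ X : ModuleCat.{0} R, TorZ R (k : ℤ) M X = TorMod R k M X := fun X => if_pos hn
    have h' : ∀ X : ModuleCat.{0} R, Module.Finite R X →
        ringKrullDim (R ⧸ Module.annihilator R X) ≤ (t : WithBot ℕ∞) →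
        ∀ x : TorMod R k M X, a • x = 0 := by
      intro X hX hd
      have := (h X hX hd).1
      rwa [e X] at this
    rw [e X]
    exact main_nat M hM a k t h' X hX hd
  · have e : TorZ R n M X = ModuleCat.of R PUnit := if_neg hn
    rw [e]
    intro x
    rfl


end
end

section
/- Let R be a commutative noetherian local ring, M a finitely generated R-module, a an element of R, n an integer and t a nonnegative integer. Suppose that a·Ext_R^n(X,M) = 0 and a·Ext_R^{n+1}(X,M) = 0 for every finitely generated R-module X whose dimension is at most t. Then a²·Ext_R^n(X,M) = 0 for every finitely generated R-module X whose dimension is at most t+1. -/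
open CategoryTheory IsLocalRing

noncomputable section

lemma aux_equiv_kill {R A B : Type} [CommRing R] [AddCommGroup A] [AddCommGroup B]
    [Module R A] [Module R B] (e : A ≃ₗ[R] B) (r : R) :
    (∀ x : A, r • x = 0) ↔ ∀ x : B, r • x = 0 := by
  constructor
  · intro h x
    have h1 := congrArg e (h (e.symm x))
    rw [map_smul, e.apply_symm_apply, map_zero] at h1
    exact h1
  · intro h x
    apply e.injective
    rw [map_smul, map_zero]
    exact h (e x)

lemma aux_hom_kill (R : Type) [CommRing R] (S : ShortComplex (ModuleCat.{0} R)) (r : R) :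
    (∀ x : S.homology, r • x = 0) ↔
      ∀ z : S.X₂, S.g z = 0 → ∃ y : S.X₁, S.f y = r • z := by
  have e : S.homology ≃ₗ[R] (LinearMap.ker S.g.hom ⧸ LinearMap.range S.moduleCatToCycles) :=
    S.moduleCatHomologyIso.toLinearEquiv
  have h1 : (∀ x : S.homology, r • x = 0) ↔
      ∀ x : (LinearMap.ker S.g.hom ⧸ LinearMap.range S.moduleCatToCycles), r • x = 0 := by
    exact aux_equiv_kill e r
  rw [h1]
  constructor
  · intro h z hz
    have := h (Submodule.Quotient.mk ⟨z, hz⟩)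
    rw [← Submodule.Quotient.mk_smul, Submodule.Quotient.mk_eq_zero] at this
    obtain ⟨y, hy⟩ := this
    exact ⟨y, congrArg Subtype.val hy⟩
  · intro h x
    obtain ⟨⟨z, hz⟩, rfl⟩ := Submodule.Quotient.mk_surjective _ x
    rw [← Submodule.Quotient.mk_smul, Submodule.Quotient.mk_eq_zero]
    obtain ⟨y, hy⟩ := h z hz
    exact ⟨y, Subtype.ext hy⟩

lemma aux_extMk_zero (R : Type) [CommRing R] (X M : ModuleCat.{0} R)
    (P : ProjectiveResolution X) (f : P.complex.X 0 ⟶ M) (hf : P.complex.d 1 0 ≫ f = 0) :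
    P.extMk f 1 rfl hf = 0 ↔ f = 0 := by
  simp only [← P.extEquivCohomologyClass.apply_eq_iff_eq,
    ProjectiveResolution.extEquivCohomologyClass_extMk,
    ProjectiveResolution.extEquivCohomologyClass_zero,
    CochainComplex.HomComplex.CohomologyClass.mk_eq_zero_iff]
  rw [CochainComplex.HomComplex.Cocycle.toSingleMk_mem_coboundaries_iff _ _ _ _ _ 1 (by simp)]
  have hz : Limits.IsZero (P.cochainComplex.X 1) :=
    CochainComplex.isZero_of_isStrictlyLE _ 0 _ (by norm_num)
  constructor
  · rintro ⟨g, hg⟩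
    rw [hz.eq_of_src g 0, Limits.comp_zero] at hg
    rw [← cancel_epi (P.cochainComplexXIso (-(0:ℕ)) 0 rfl).hom, Limits.comp_zero]
    exact hg.symm
  · rintro rfl
    exact ⟨0, by simp⟩

lemma aux_smul_extMk (R : Type) [CommRing R] (X M : ModuleCat.{0} R)
    (P : ProjectiveResolution X) (n : ℕ) (f : P.complex.X n ⟶ M)
    (hf : P.complex.d (n+1) n ≫ f = 0) (r : R) :
    r • P.extMk f (n+1) rfl hf = P.extMk (r • f) (n+1) rfl (by simp [hf]) := by
  rw [Abelian.Ext.smul_eq_comp_mk₀, ProjectiveResolution.extMk_comp_mk₀]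
  congr 1
  try simp

lemma aux_bridge (R : Type) [CommRing R] (X M : ModuleCat.{0} R) (n : ℕ) (r : R) :
    (∀ x : ExtMod R n X M, r • x = 0) ↔ ∀ x : Abelian.Ext X M n, r • x = 0 := by
  let P := projectiveResolution X
  let e : ExtMod R n X M ≃ₗ[R] (P.complex.linearYonedaObj R M).homology n :=
    (P.isoExt (R := R) n M).toLinearEquiv
  have h1 : (∀ x : ExtMod R n X M, r • x = 0) ↔
      ∀ x : (P.complex.linearYonedaObj R M).homology n, r • x = 0 := by
    exact aux_equiv_kill e r
  rw [h1]
  have h2 := aux_hom_kill R ((P.complex.linearYonedaObj R M).sc n) r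
  refine h2.trans ?_
  have h3 : (∀ x : Abelian.Ext X M n, r • x = 0) ↔
      ∀ (f : P.complex.X n ⟶ M) (hf : P.complex.d (n+1) n ≫ f = 0),
        P.extMk (r • f) (n+1) rfl (by rw [Linear.comp_smul, hf, smul_zero]) = 0 := by
    constructor
    · intro h f hf
      rw [← aux_smul_extMk R X M P n f hf r]
      exact h _
    · intro h x
      obtain ⟨f, hf, rfl⟩ := P.extMk_surjective x (n+1) rfl
      rw [aux_smul_extMk]
      exact h f hf
  rw [h3]
  have hnext : (ComplexShape.up ℕ).next n = n + 1 := by simp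
  refine forall_congr' fun (f : P.complex.X n ⟶ M) => ?_
  have hg : (((P.complex.linearYonedaObj R M).sc n).g f = 0) ↔
      P.complex.d (n+1) n ≫ f = 0 := by
    change (P.complex.linearYonedaObj R M).d n ((ComplexShape.up ℕ).next n) f = 0 ↔ _
    rw [hnext]
    rfl
  have key : ∀ hf : P.complex.d (n+1) n ≫ f = 0,
      ((∃ y, ((P.complex.linearYonedaObj R M).sc n).f y = (r • f : P.complex.X n ⟶ M)) ↔
        P.extMk (r • f) (n+1) rfl (by rw [Linear.comp_smul, hf, smul_zero]) = 0) := by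
    intro hf
    cases n with
    | zero =>
      rw [aux_extMk_zero]
      have : ((P.complex.linearYonedaObj R M).sc 0).f = 0 :=
        (P.complex.linearYonedaObj R M).shape ((ComplexShape.up ℕ).prev 0) 0
          (by rw [ComplexShape.up_Rel]; omega)
      rw [this]
      constructor
      · rintro ⟨y, hy⟩
        exact hy.symm
      · intro h
        exact ⟨0, h.symm⟩
    | succ p =>
      rw [P.extMk_eq_zero_iff _ _ _ _ p rfl]
      have hprev : (ComplexShape.up ℕ).prev (p+1) = p := by simp
      change (∃ y, (P.complex.linearYonedaObj R M).d ((ComplexShape.up ℕ).prev (p+1)) (p+1) y =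
        (r • f : P.complex.X (p+1) ⟶ M)) ↔ _
      rw [hprev]
      rfl
  constructor
  · intro h hf
    exact (key hf).1 (h (hg.2 hf))
  · intro h hf
    exact (key (hg.1 hf)).2 (h (hg.1 hf))

lemma aux_dim (R : Type) [CommRing R] [IsNoetherianRing R] (X : ModuleCat.{0} R)
    [Module.Finite R X] (y : R) (t : ℕ)
    (hn : ∀ p ∈ (Module.annihilator R X).minimalPrimes, y ∉ p)
    (hd : Module.supportDim R X ≤ ((t + 1 : ℕ) : WithBot ℕ∞))
    (Z : Type) [AddCommGroup Z] [Module R Z] [Module.Finite R Z]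
    (hZ : Module.support R Z ⊆ Module.support R X) (hy : ∀ z : Z, y • z = 0) :
    ringKrullDim (R ⧸ Module.annihilator R Z) ≤ (t : WithBot ℕ∞) := by
  rw [← Module.supportDim_eq_ringKrullDim_quotient_annihilator]
  have h1 := (Module.supportDim_quotSMulTop_succ_le_of_notMem_minimalPrimes hn).trans hd
  have h2 : Module.supportDim R Z ≤ Module.supportDim R (QuotSMulTop y X) := by
    have hsub : Module.support R Z ⊆ Module.support R (QuotSMulTop y X) := by
      intro p hp
      rw [Module.support_quotSMulTop]
      refine ⟨hZ hp, ?_⟩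
      have := Module.mem_support_iff_of_finite.mp hp
      simp only [PrimeSpectrum.mem_zeroLocus, Set.singleton_subset_iff]
      exact this (Module.mem_annihilator.2 hy)
    exact Order.krullDim_le_of_strictMono (fun a ↦ ⟨a.1, hsub a.2⟩) (fun {_ _} lt ↦ lt)
  refine h2.trans ?_
  generalize Module.supportDim R (QuotSMulTop y X) = d at h1
  push_cast at h1
  induction d with
  | bot => exact bot_le
  | coe d =>
    have h3 : d + 1 ≤ (t : ℕ∞) + 1 := by exact_mod_cast h1
    have h4 : d ≤ (t : ℕ∞) := (ENat.add_le_add_iff_right (by simp)).1 h3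
    exact_mod_cast h4

lemma aux_step (R : Type) [CommRing R] [IsNoetherianRing R]
    (M X : ModuleCat.{0} R) (a y : R) (n : ℕ)
    (hK : ∀ x : Abelian.Ext (ModuleCat.of R (LinearMap.ker (LinearMap.lsmul R X y))) M n,
      a • x = 0)
    (hC : ∀ x : Abelian.Ext
      (ModuleCat.of R (X ⧸ LinearMap.range (LinearMap.lsmul R X y))) M (n + 1), a • x = 0)
    (e : Abelian.Ext X M n) : ∃ g : Abelian.Ext X M n, a ^ 2 • e = y • g := by
  let φ : X →ₗ[R] X := LinearMap.lsmul R X y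
  let S := φ.rangeRestrict.shortComplexKer
  have hS : S.ShortExact := LinearMap.shortExact_shortComplexKer φ.surjective_rangeRestrict
  let T : ShortComplex (ModuleCat.{0} R) :=
    ModuleCat.shortComplexOfCompEqZero (LinearMap.range φ).subtype (LinearMap.range φ).mkQ
      (by ext; simp)
  have hT : T.ShortExact := ModuleCat.shortComplex_shortExact T
    (LinearMap.exact_subtype_mkQ _) (Submodule.injective_subtype _) (Submodule.mkQ_surjective _)
  have hker : LinearMap.ker φ.rangeRestrict = LinearMap.ker φ := LinearMap.ker_rangeRestrict φ
  have hK' : ∀ x : Abelian.Ext S.X₁ M n, a • x = 0 := by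
    change ∀ x : Abelian.Ext (ModuleCat.of R (LinearMap.ker φ.rangeRestrict)) M n, a • x = 0
    rw [hker]
    exact hK
  obtain ⟨f, hf⟩ := Abelian.Ext.contravariant_sequence_exact₂ (S := S) hS M (a • e)
    (by rw [Abelian.Ext.comp_smul]; exact hK' _)
  obtain ⟨g, hg⟩ := Abelian.Ext.contravariant_sequence_exact₁ (S := T) hT (Y := M) (a • f)
    (add_comm 1 n) (by rw [Abelian.Ext.comp_smul]; exact hC _)
  refine ⟨g, ?_⟩
  have hfac : S.g ≫ T.f = y • 𝟙 X := by
    ext x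
    rfl
  rw [pow_two, mul_smul, ← hf, ← Abelian.Ext.comp_smul]
  erw [← hg]
  rw [Abelian.Ext.mk₀_comp_mk₀_assoc]
  erw [hfac]
  rw [Abelian.Ext.mk₀_smul, Abelian.Ext.smul_comp, Abelian.Ext.mk₀_id_comp]

lemma aux_main (R : Type) [CommRing R] [IsNoetherianRing R] [IsLocalRing R]
    (M : ModuleCat.{0} R) (hM : Module.Finite R M) (a : R) (n : ℕ) (t : ℕ)
    (h : ∀ X : ModuleCat.{0} R, Module.Finite R X →
        ringKrullDim (R ⧸ Module.annihilator R X) ≤ (t : WithBot ℕ∞) →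
        (∀ x : Abelian.Ext X M n, a • x = 0) ∧ (∀ x : Abelian.Ext X M (n + 1), a • x = 0))
    (X : ModuleCat.{0} R) (hX : Module.Finite R X)
    (hd : ringKrullDim (R ⧸ Module.annihilator R X) ≤ ((t + 1 : ℕ) : WithBot ℕ∞))
    (e : Abelian.Ext X M n) : (a ^ 2) • e = 0 := by
  by_cases hm : maximalIdeal R ∈ (Module.annihilator R X).minimalPrimes
  · have : ringKrullDim (R ⧸ Module.annihilator R X) ≤ (t : WithBot ℕ∞) := by
      refine le_trans ?_ (Nat.cast_nonneg t : (0 : WithBot ℕ∞) ≤ _)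
      rw [ringKrullDim_quotient]
      have hs : ∀ p ∈ PrimeSpectrum.zeroLocus (Module.annihilator R X : Set R),
          p.asIdeal = maximalIdeal R := fun p hp =>
        le_antisymm (le_maximalIdeal p.2.ne_top)
          (hm.2 ⟨p.2, hp⟩ (le_maximalIdeal p.2.ne_top))
      have : Subsingleton (PrimeSpectrum.zeroLocus (Module.annihilator R X : Set R)) :=
        ⟨fun p q => Subtype.ext (PrimeSpectrum.ext ((hs _ p.2).trans (hs _ q.2).symm))⟩
      exact Order.krullDim_nonpos_of_subsingleton
    rw [pow_two, mul_smul, (h X hX this).1 e, smul_zero]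
  · have hav : ∃ x ∈ maximalIdeal R, ∀ p ∈ (Module.annihilator R X).minimalPrimes, x ∉ p := by
      by_contra hcon
      push Not at hcon
      obtain ⟨p, hp, hle⟩ := (Ideal.subset_union_prime_finite
        (Ideal.finite_minimalPrimes_of_isNoetherianRing R (Module.annihilator R X))
        (f := id) 0 0 (fun _ h _ _ ↦ h.1.1) (I := maximalIdeal R)).1 (by
          intro x hx
          obtain ⟨p, hp, hxp⟩ := hcon x hx
          exact Set.mem_biUnion hp hxp)
      have hpm : p = maximalIdeal R := le_antisymm (le_maximalIdeal hp.1.1.ne_top) hle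
      exact hm (hpm ▸ hp)
    obtain ⟨x, hxm, hx⟩ := hav
    rw [← Module.supportDim_eq_ringKrullDim_quotient_annihilator] at hd
    have hkr : ∀ k : ℕ, ∃ g : Abelian.Ext X M n, a ^ 2 • e = x ^ k • g := by
      intro k
      have hxk : ∀ p ∈ (Module.annihilator R X).minimalPrimes, x ^ k ∉ p :=
        fun p hp hmem => hx p hp (hp.1.1.mem_of_pow_mem k hmem)
      apply aux_step
      · refine (h (ModuleCat.of R _) (by dsimp; infer_instance) (aux_dim R X (x ^ k) t hxk hd _
          (Module.support_subset_of_injective _ (Submodule.injective_subtype _)) ?_)).1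
        intro z
        exact Subtype.ext z.2
      · refine (h (ModuleCat.of R _) (by dsimp; infer_instance) (aux_dim R X (x ^ k) t hxk hd _
          (Module.support_subset_of_surjective _ (Submodule.mkQ_surjective _)) ?_)).2
        intro z
        obtain ⟨z, rfl⟩ := Submodule.mkQ_surjective _ z
        rw [← map_smul]
        exact (Submodule.Quotient.mk_eq_zero _).2 ⟨z, rfl⟩
    have hbot := Ideal.iInf_pow_smul_eq_bot_of_isLocalRing (R := R) (M := Abelian.Ext X M n)
      (I := maximalIdeal R) (Ideal.IsPrime.ne_top inferInstance)
    rw [← Submodule.mem_bot R, ← hbot, Submodule.mem_iInf]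
    intro k
    obtain ⟨g, hg⟩ := hkr k
    rw [hg]
    exact Submodule.smul_mem_smul (Ideal.pow_mem_pow hxm k) trivial


/-- If `a · Ext^n(X,M) = 0` and `a · Ext^{n+1}(X,M) = 0` for every finitely
generated `R`-module `X` of dimension at most `t`, then `a² · Ext^n(X,M) = 0` for every
finitely generated `R`-module `X` of dimension at most `t + 1`. -/
theorem stmt2 (R : Type) [CommRing R] [IsNoetherianRing R] [IsLocalRing R]
    (M : ModuleCat.{0} R) (hM : Module.Finite R M) (a : R) (n : ℤ) (t : ℕ)
    (h : ∀ X : ModuleCat.{0} R, Module.Finite R X →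
        ringKrullDim (R ⧸ Module.annihilator R X) ≤ (t : WithBot ℕ∞) →
        (∀ x : ExtZ R n X M, a • x = 0) ∧ (∀ x : ExtZ R (n + 1) X M, a • x = 0)) :
    ∀ X : ModuleCat.{0} R, Module.Finite R X →
      ringKrullDim (R ⧸ Module.annihilator R X) ≤ ((t + 1 : ℕ) : WithBot ℕ∞) →
      ∀ x : ExtZ R n X M, (a ^ 2) • x = 0 := by
  intro X hX hd
  by_cases hn : 0 ≤ n
  · obtain ⟨k, rfl⟩ := Int.eq_ofNat_of_zero_le hn
    have e1 : ∀ X : ModuleCat.{0} R, ExtZ R (k : ℤ) X M = ExtMod R k X M := fun X => by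
      simp [ExtZ]
    have e2 : ∀ X : ModuleCat.{0} R, ExtZ R ((k : ℤ) + 1) X M = ExtMod R (k + 1) X M :=
      fun X => by
        have h0 : (0:ℤ) ≤ (k : ℤ) + 1 := by positivity
        have h1 : ((k : ℤ) + 1).toNat = k + 1 := by simp
        rw [ExtZ, if_pos h0, h1]
    have h' : ∀ X : ModuleCat.{0} R, Module.Finite R X →
        ringKrullDim (R ⧸ Module.annihilator R X) ≤ (t : WithBot ℕ∞) →
        (∀ x : Abelian.Ext X M k, a • x = 0) ∧ (∀ x : Abelian.Ext X M (k + 1), a • x = 0) := by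
      intro X hX hd
      have hh := h X hX hd
      rw [← aux_bridge, ← aux_bridge, ← e1, ← e2]
      exact hh
    rw [e1, aux_bridge]
    exact aux_main R M hM a k t h' X hX hd
  · have e1 : ExtZ R n X M = ModuleCat.of R PUnit := by simp [ExtZ, hn]
    rw [e1]
    intro x
    rfl

end
end

section
/- Let R be a commutative noetherian local ring of Krull dimension d, let a be an element of R and n an integer. Suppose that a·Tor_i^R(M,N) = 0 for all integers i with n−2d ≤ i ≤ n and all finitely generated R-modules M and N of finite length. Then a^{2^{2d}}·Tor_n^R(M,N) = 0 for all finitely generated R-modules M and N. -/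
open CategoryTheory IsLocalRing

noncomputable section

section Helpers

open MonoidalCategory

theorem aux_exists_gamma (R : Type) [CommRing R] [IsNoetherianRing R] [IsLocalRing R]
    (M : Type) [AddCommGroup M] [Module R M] [Module.Finite R M] :
    ∃ G : Submodule R M, IsFiniteLength R G ∧ ∃ x ∈ maximalIdeal R, IsSMulRegular (M ⧸ G) x := by
  have : IsNoetherian R M := inferInstance
  obtain ⟨G, hG, hmax⟩ := set_has_maximal_iff_noetherian.mpr this
    {G : Submodule R M | IsFiniteLength R G} ⟨⊥, IsFiniteLength.of_subsingleton⟩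
  refine ⟨G, hG, ?_⟩
  by_contra hcon
  push Not at hcon
  have hsub : ((maximalIdeal R : Ideal R) : Set R) ⊆ ⋃ p ∈ associatedPrimes R (M ⧸ G), (p : Set R) := by
    rw [biUnion_associatedPrimes_eq_compl_regular R (M ⧸ G)]
    intro x hx; exact hcon x hx
  obtain ⟨p, hp, hle⟩ := (Ideal.subset_union_prime_finite (associatedPrimes.finite R (M ⧸ G))
    (f := id) ⊥ ⊥ (fun p hp _ _ => hp.1)).mp hsub
  have hpm : p = maximalIdeal R :=
    ((maximalIdeal.isMaximal R).eq_of_le hp.1.ne_top hle).symm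
  subst hpm
  obtain ⟨hpr, f, hf⟩ := (isAssociatedPrime_iff_exists_injective_linearMap _ _).mp hp
  have hsimp : IsSimpleModule R (R ⧸ maximalIdeal R) :=
    isSimpleModule_iff_isCoatom.mpr (maximalIdeal.isMaximal R).out
  have hart : IsArtinian R (LinearMap.range f) :=
    isArtinian_of_surjective _ f.rangeRestrict f.surjective_rangeRestrict
  have hGart : IsArtinian R G := (isFiniteLength_iff_isNoetherian_isArtinian.mp hG).2
  let G' : Submodule R M := (LinearMap.range f).comap G.mkQ
  have hGG' : G ≤ G' := fun z hz => by
    have : G.mkQ z = 0 := by simpa using hz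
    simp only [G', Submodule.mem_comap, this, Submodule.zero_mem]
  have hG' : IsFiniteLength R G' := by
    rw [isFiniteLength_iff_isNoetherian_isArtinian]
    refine ⟨inferInstance, ?_⟩
    refine isArtinian_of_range_eq_ker (Submodule.inclusion hGG')
      (G.mkQ.restrict (p := G') (q := LinearMap.range f) (fun z hz => hz)) ?_
    ext ⟨z, hz⟩
    simp [Submodule.range_inclusion, LinearMap.restrict_apply]
  refine hmax G' hG' (lt_of_le_of_ne hGG' ?_)
  intro heq
  obtain ⟨z, hz⟩ := G.mkQ_surjective (f 1)
  have hz1 : z ∈ G' := ⟨1, hz.symm⟩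
  rw [← heq] at hz1
  have : f 1 = 0 := by rw [← hz]; simpa using hz1
  have h1 : (1 : R ⧸ maximalIdeal R) = 0 := hf (by rw [this, map_zero])
  exact one_ne_zero h1

open scoped Pointwise in
theorem aux_smul_exact (R : Type) [CommRing R] (M : Type) [AddCommGroup M] [Module R M] (y : R) :
    Function.Exact (y • (LinearMap.id : M →ₗ[R] M))
      (Submodule.mkQ (y • (⊤ : Submodule R M))) := by
  intro z
  simp [Submodule.mem_smul_pointwise_iff_exists]

structure HalfExact (R : Type) [CommRing R] (T : ModuleCat.{0} R ⥤ ModuleCat.{0} R) : Prop where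
  lin : ∀ (r : R) (X : ModuleCat.{0} R) (x : T.obj X), (T.map (r • 𝟙 X)).hom x = r • x
  ex : ∀ S : ShortComplex (ModuleCat.{0} R), S.ShortExact →
    Function.Exact (T.map S.f).hom (T.map S.g).hom
  fin : ∀ X : ModuleCat.{0} R, Module.Finite R X → Module.Finite R (T.obj X)

theorem aux_main_s3 (R : Type) [CommRing R] [IsNoetherianRing R] [IsLocalRing R]
    (T : ModuleCat.{0} R ⥤ ModuleCat.{0} R) (hT : HalfExact R T) (a : R)
    (h : ∀ M : ModuleCat.{0} R, IsFiniteLength R M → ∀ x : T.obj M, a • x = 0) (r : ℕ) :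
    ∀ M : ModuleCat.{0} R, Module.Finite R M → Module.supportDim R M < (r : WithBot ℕ∞) →
      ∀ x : T.obj M, a ^ r • x = 0 := by
  induction r with
  | zero =>
    intro M hM hd x
    have hs : Subsingleton M := by
      rw [← Module.supportDim_eq_bot_iff_subsingleton R]
      generalize Module.supportDim R M = D at hd
      induction D with
      | bot => rfl
      | coe D => exact absurd hd (not_lt.mpr (WithBot.coe_le_coe.mpr zero_le))
    have := hT.lin 0 M x
    have h2 := hT.lin 1 M x
    rw [pow_zero, ← h2]
    have e : (1 : R) • 𝟙 M = (0 : R) • 𝟙 M := by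
      ext m; exact Subsingleton.elim _ _
    rw [e, this]; simp
  | succ r ih =>
    intro M hM hd x
    obtain ⟨G, hG, y, hy, hreg⟩ := aux_exists_gamma R M
    let Q : ModuleCat.{0} R := ModuleCat.of R (M ⧸ G)
    have hQf : Module.Finite R (M ⧸ G) := inferInstance
    have hQd : Module.supportDim R (M ⧸ G) < ((r + 1 : ℕ) : WithBot ℕ∞) :=
      lt_of_le_of_lt (Module.supportDim_le_of_surjective G.mkQ G.mkQ_surjective) hd
    -- step 1 : the quotient
    have key : ∀ z : T.obj Q, a ^ r • z = 0 := by
      intro z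
      have hfin : Module.Finite R (T.obj Q) := hT.fin Q hQf
      have hk : ∀ k : ℕ, a ^ r • z ∈ ((maximalIdeal R) ^ k • ⊤ : Submodule R (T.obj Q)) := by
        intro k
        have hregk : IsSMulRegular (M ⧸ G) (y ^ (k + 1)) := hreg.pow _
        have hyk : y ^ (k + 1) ∈ maximalIdeal R := Ideal.pow_mem_of_mem _ hy _ (Nat.succ_pos k)
        have hdim := Module.supportDim_quotSMulTop_succ_eq_supportDim hregk hyk
        let S : ShortComplex (ModuleCat.{0} R) :=
          ShortComplex.mk (X₁ := Q) (X₂ := Q) (X₃ := ModuleCat.of R (QuotSMulTop (y ^ (k + 1)) (M ⧸ G)))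
            (y ^ (k + 1) • 𝟙 Q) (ModuleCat.ofHom (Submodule.mkQ _)) (by
              refine ModuleCat.hom_ext (LinearMap.ext fun m => ?_)
              exact (aux_smul_exact R (M ⧸ G) (y ^ (k + 1))).apply_apply_eq_zero m)
        have hS : S.ShortExact := ModuleCat.shortComplex_shortExact S
          (aux_smul_exact R (M ⧸ G) (y ^ (k + 1))) hregk (Submodule.mkQ_surjective _)
        have hex := hT.ex S hS
        have hz : (T.map S.g).hom (a ^ r • z) = 0 := by
          rw [map_smul]
          refine ih _ (inferInstanceAs (Module.Finite R (QuotSMulTop (y ^ (k + 1)) (M ⧸ G)))) ?_ _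
          change Module.supportDim R (QuotSMulTop (y ^ (k + 1)) (M ⧸ G)) < _
          rw [← hdim] at hQd
          push_cast at hQd
          exact lt_of_add_lt_add_right hQd
        obtain ⟨w, hw⟩ := (hex _).mp hz
        rw [← hw]
        have : (T.map S.f).hom w = y ^ (k + 1) • w := hT.lin _ _ _
        rw [this]
        exact Submodule.smul_mem_smul (Ideal.pow_le_pow_right (Nat.le_succ k) (Ideal.pow_mem_pow hy _))
          Submodule.mem_top
      have := Ideal.iInf_pow_smul_eq_bot_of_isLocalRing (M := T.obj Q) (maximalIdeal R)
        (Ideal.IsPrime.ne_top inferInstance)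
      have hm : a ^ r • z ∈ (⨅ i : ℕ, (maximalIdeal R) ^ i • ⊤ : Submodule R (T.obj Q)) :=
        (Submodule.mem_iInf _).mpr hk
      rw [this] at hm
      exact hm
    let S : ShortComplex (ModuleCat.{0} R) :=
      ShortComplex.mk (X₁ := ModuleCat.of R G) (X₂ := M) (X₃ := Q)
        (ModuleCat.ofHom G.subtype) (ModuleCat.ofHom G.mkQ) (by
          ext m
          exact (LinearMap.exact_subtype_mkQ G).apply_apply_eq_zero m)
    have hS : S.ShortExact := ModuleCat.shortComplex_shortExact S
      (LinearMap.exact_subtype_mkQ G) G.injective_subtype G.mkQ_surjective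
    have hz : (T.map S.g).hom (a ^ r • x) = 0 := by
      rw [map_smul]; exact key _
    obtain ⟨w, hw⟩ := (hT.ex S hS _).mp hz
    rw [pow_succ', mul_smul, ← hw, ← map_smul, h _ hG w, map_zero]


/-- Tensoring a complex on the left. -/
def GP {R : Type} [CommRing R] (K : ChainComplex (ModuleCat.{0} R) ℕ) :
    ModuleCat.{0} R ⥤ ChainComplex (ModuleCat.{0} R) ℕ where
  obj X := (((tensoringLeft (ModuleCat.{0} R)).obj X).mapHomologicalComplex _).obj K
  map f := (NatTrans.mapHomologicalComplex ((tensoringLeft (ModuleCat.{0} R)).map f) _).app K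
  map_id X := by ext; simp
  map_comp f g := by ext; simp

/-- Functoriality in the complex. -/
def GPmap {R : Type} [CommRing R] {K L : ChainComplex (ModuleCat.{0} R) ℕ} (φ : K ⟶ L) :
    GP K ⟶ GP L where
  app X := (((tensoringLeft (ModuleCat.{0} R)).obj X).mapHomologicalComplex _).map φ
  naturality _ _ f := (NatTrans.mapHomologicalComplex_naturality
    ((tensoringLeft (ModuleCat.{0} R)).map f) φ).symm

instance {R : Type} [CommRing R] (K : ChainComplex (ModuleCat.{0} R) ℕ) :
    (GP K).PreservesZeroMorphisms where
  map_zero X Y := by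
    refine HomologicalComplex.hom_ext _ _ fun i => ?_
    change (0 : X ⟶ Y) ▷ K.X i = 0
    simp

theorem GP_shortExact {R : Type} [CommRing R] (K : ChainComplex (ModuleCat.{0} R) ℕ)
    (hK : ∀ i, Projective (K.X i)) (S : ShortComplex (ModuleCat.{0} R)) (hS : S.ShortExact) :
    (S.map (GP K)).ShortExact := by
  apply HomologicalComplex.shortExact_of_degreewise_shortExact
  intro i
  have hp : Module.Projective R (K.X i) := (IsProjective.iff_projective _).mpr (hK i)
  have hfl : Module.Flat R (K.X i) := inferInstance
  exact hS.map_of_exact (tensorRight (K.X i))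

theorem GP_lin {R : Type} [CommRing R] (K : ChainComplex (ModuleCat.{0} R) ℕ)
    (r : R) (X : ModuleCat.{0} R) : (GP K).map (r • 𝟙 X) = r • 𝟙 ((GP K).obj X) := by
  refine HomologicalComplex.hom_ext _ _ fun i => ?_
  change (r • 𝟙 X) ▷ K.X i = r • 𝟙 (X ⊗ K.X i)
  simp

theorem GPmap_lin {R : Type} [CommRing R] (K : ChainComplex (ModuleCat.{0} R) ℕ)
    (r : R) (X : ModuleCat.{0} R) : (GPmap (r • 𝟙 K)).app X = r • 𝟙 ((GP K).obj X) := by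
  refine HomologicalComplex.hom_ext _ _ fun i => ?_
  change X ◁ (r • 𝟙 (K.X i)) = r • 𝟙 (X ⊗ K.X i)
  simp

theorem homologyMap_smul_id {R : Type} [CommRing R] (K : ChainComplex (ModuleCat.{0} R) ℕ)
    (r : R) (n : ℕ) : HomologicalComplex.homologyMap (r • 𝟙 K) n = r • 𝟙 _ := by
  have : HomologicalComplex.homologyMap (r • 𝟙 K) n =
    ShortComplex.homologyMap (r • 𝟙 (K.sc n)) := rfl
  rw [this, ShortComplex.homologyMap_smul, ShortComplex.homologyMap_id]
  rfl

abbrev TT (R : Type) [CommRing R] (n : ℕ) (X N : ModuleCat.{0} R) : ModuleCat.{0} R :=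
  ((Tor (ModuleCat.{0} R) n).obj X).obj N

abbrev PR {R : Type} [CommRing R] (N : ModuleCat.{0} R) := (projectiveResolution N)

/-- Tor as homology. -/
def torIso {R : Type} [CommRing R] (n : ℕ) (X N : ModuleCat.{0} R) :
    TT R n X N ≅ ((GP (PR N).complex).obj X).homology n :=
  (PR N).isoLeftDerivedObj ((tensoringLeft (ModuleCat.{0} R)).obj X) n

theorem torIso_nat1 {R : Type} [CommRing R] (n : ℕ) {X Y : ModuleCat.{0} R} (f : X ⟶ Y)
    (N : ModuleCat.{0} R) :
    ((Tor (ModuleCat.{0} R) n).map f).app N = (torIso n X N).hom ≫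
      HomologicalComplex.homologyMap ((GP (PR N).complex).map f) n ≫ (torIso n Y N).inv :=
  ProjectiveResolution.leftDerived_app_eq ((tensoringLeft (ModuleCat.{0} R)).map f) (PR N) n

theorem torIso_nat2 {R : Type} [CommRing R] (n : ℕ) (X : ModuleCat.{0} R)
    {M N : ModuleCat.{0} R} (f : M ⟶ N) (g : (PR M).complex ⟶ (PR N).complex)
    (w : g ≫ (PR N).π = (PR M).π ≫ (ChainComplex.single₀ _).map f) :
    ((Tor (ModuleCat.{0} R) n).obj X).map f = (torIso n X M).hom ≫
      HomologicalComplex.homologyMap ((GPmap g).app X) n ≫ (torIso n X N).inv :=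
  Functor.leftDerived_map_eq ((tensoringLeft (ModuleCat.{0} R)).obj X) n f g w

theorem tor_lin1 {R : Type} [CommRing R] (n : ℕ) (r : R) (X N : ModuleCat.{0} R) :
    ((Tor (ModuleCat.{0} R) n).map (r • 𝟙 X)).app N = r • 𝟙 _ := by
  rw [torIso_nat1, GP_lin, homologyMap_smul_id]
  simp

theorem tor_lin2 {R : Type} [CommRing R] (n : ℕ) (r : R) (X N : ModuleCat.{0} R) :
    ((Tor (ModuleCat.{0} R) n).obj X).map (r • 𝟙 N) = r • 𝟙 _ := by
  rw [torIso_nat2 n X (r • 𝟙 N) (r • 𝟙 _) ?_, GPmap_lin, homologyMap_smul_id]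
  · simp
  · refine HomologicalComplex.to_single_hom_ext ?_
    simp only [HomologicalComplex.comp_f, HomologicalComplex.smul_f_apply, 
      Linear.smul_comp, Category.id_comp, ChainComplex.single₀_map_f_zero]
    exact ((Linear.comp_smul _ _ _ _ _ _).trans (congrArg (r • ·) (Category.comp_id _))).symm

theorem exact_conj {R : Type} [CommRing R] {A B C A' B' C' : ModuleCat.{0} R} (e1 : A ≅ A')
    (e2 : B ≅ B') (e3 : C ≅ C') (f : A' ⟶ B') (g : B' ⟶ C') (h : Function.Exact f.hom g.hom) :
    Function.Exact (e1.hom ≫ f ≫ e2.inv).hom (e2.hom ≫ g ≫ e3.inv).hom := by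
  intro y
  have hinj : Function.Injective e3.inv.hom := (ModuleCat.mono_iff_injective _).mp inferInstance
  constructor
  · intro hy
    have h1 : g.hom (e2.hom.hom y) = 0 := hinj (by rw [map_zero]; exact hy)
    obtain ⟨x, hx⟩ := (h _).mp h1
    refine ⟨e1.inv.hom x, ?_⟩
    have a1 : e1.hom.hom (e1.inv.hom x) = x := e1.toLinearEquiv.apply_symm_apply x
    change e2.inv.hom (f.hom (e1.hom.hom (e1.inv.hom x))) = y
    rw [a1, hx]
    exact e2.toLinearEquiv.symm_apply_apply y
  · rintro ⟨x, rfl⟩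
    change e3.inv.hom (g.hom (e2.hom.hom (e2.inv.hom (f.hom (e1.hom.hom x))))) = 0
    have a1 : ∀ z, e2.hom.hom (e2.inv.hom z) = z := e2.toLinearEquiv.apply_symm_apply
    rw [a1, h.apply_apply_eq_zero, map_zero]

theorem tor_ex1 {R : Type} [CommRing R] (n : ℕ) (N : ModuleCat.{0} R)
    (S : ShortComplex (ModuleCat.{0} R)) (hS : S.ShortExact) :
    Function.Exact (((Tor (ModuleCat.{0} R) n).map S.f).app N).hom
      (((Tor (ModuleCat.{0} R) n).map S.g).app N).hom := by
  have h := (GP_shortExact (PR N).complex (PR N).projective S hS).homology_exact₂ n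
  rw [ShortComplex.ShortExact.moduleCat_exact_iff_function_exact] at h
  rw [torIso_nat1, torIso_nat1]
  exact exact_conj _ _ _ _ _ h

/-- connecting map on homology -/
def dG {R : Type} [CommRing R] (n : ℕ) (S : ShortComplex (ModuleCat.{0} R)) (hS : S.ShortExact)
    (N : ModuleCat.{0} R) : ((GP (PR N).complex).obj S.X₃).homology (n + 1) ⟶
      ((GP (PR N).complex).obj S.X₁).homology n :=
  (GP_shortExact (PR N).complex (PR N).projective S hS).δ (n + 1) n (by simp)

/-- connecting map -/
def dT {R : Type} [CommRing R] (n : ℕ) (S : ShortComplex (ModuleCat.{0} R)) (hS : S.ShortExact)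
    (N : ModuleCat.{0} R) : TT R (n + 1) S.X₃ N ⟶ TT R n S.X₁ N :=
  (torIso (n + 1) S.X₃ N).hom ≫ dG n S hS N ≫ (torIso n S.X₁ N).inv

theorem dT_nat {R : Type} [CommRing R] (n : ℕ) (S : ShortComplex (ModuleCat.{0} R))
    (hS : S.ShortExact) {M N : ModuleCat.{0} R} (f : M ⟶ N) :
    dT n S hS M ≫ ((Tor (ModuleCat.{0} R) n).obj S.X₁).map f =
      ((Tor (ModuleCat.{0} R) (n + 1)).obj S.X₃).map f ≫ dT n S hS N := by
  let g := ProjectiveResolution.lift f (PR M) (PR N)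
  have w : g ≫ (PR N).π = (PR M).π ≫ (ChainComplex.single₀ _).map f :=
    ProjectiveResolution.lift_commutes _ _ _
  rw [torIso_nat2 n S.X₁ f g w, torIso_nat2 (n + 1) S.X₃ f g w]
  have : dG n S hS M ≫ HomologicalComplex.homologyMap ((GPmap g).app S.X₁) n =
      HomologicalComplex.homologyMap ((GPmap g).app S.X₃) (n + 1) ≫ dG n S hS N :=
    HomologicalComplex.HomologySequence.δ_naturality (S.mapNatTrans (GPmap g))
    (GP_shortExact (PR M).complex (PR M).projective S hS)
    (GP_shortExact (PR N).complex (PR N).projective S hS) (n + 1) n (by simp)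
  simp only [dT, Category.assoc, Iso.inv_hom_id_assoc]
  rw [reassoc_of% this]

theorem dT_ex {R : Type} [CommRing R] (n : ℕ) (S : ShortComplex (ModuleCat.{0} R))
    (hS : S.ShortExact) (N : ModuleCat.{0} R) :
    Function.Exact (dT n S hS N).hom (((Tor (ModuleCat.{0} R) n).map S.f).app N).hom := by
  have h := (GP_shortExact (PR N).complex (PR N).projective S hS).homology_exact₁ (n+1) n (by simp)
  rw [ShortComplex.ShortExact.moduleCat_exact_iff_function_exact] at h
  rw [torIso_nat1, dT]
  exact exact_conj _ _ _ _ _ h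

theorem dT_inj {R : Type} [CommRing R] (n : ℕ) (S : ShortComplex (ModuleCat.{0} R))
    (hS : S.ShortExact) (N : ModuleCat.{0} R) (hF : Limits.IsZero (TT R (n + 1) S.X₂ N)) :
    Function.Injective (dT n S hS N).hom := by
  have : Mono (dG n S hS N) := (GP_shortExact (PR N).complex (PR N).projective S hS).mono_δ (n+1) n (by simp)
    (hF.of_iso (torIso _ _ _).symm)
  rw [← ModuleCat.mono_iff_injective, dT]
  infer_instance

theorem tor_flat {R : Type} [CommRing R] (n : ℕ) (F : ModuleCat.{0} R) [Module.Flat R F]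
    (N : ModuleCat.{0} R) : Limits.IsZero (TT R (n + 1) F N) := by
  refine Limits.IsZero.of_iso ?_ (torIso (n + 1) F N)
  rw [← HomologicalComplex.exactAt_iff_isZero_homology]
  have := (PR N).complex_exactAt_succ n
  exact this.map (tensorLeft F)

def tor0 {R : Type} [CommRing R] (X : ModuleCat.{0} R) :
    (Tor (ModuleCat.{0} R) 0).obj X ≅ (tensorLeft X) :=
  haveI : Limits.PreservesFiniteColimits ((tensoringLeft (ModuleCat.{0} R)).obj X) :=
    inferInstanceAs (Limits.PreservesFiniteColimits (tensorLeft X))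
  ((tensoringLeft (ModuleCat.{0} R)).obj X).leftDerivedZeroIsoSelf

theorem tor_flat_inj {R : Type} [CommRing R] (n : ℕ) (F : ModuleCat.{0} R) [Module.Flat R F]
    {M N : ModuleCat.{0} R} (f : M ⟶ N) [Mono f] :
    Function.Injective (((Tor (ModuleCat.{0} R) n).obj F).map f).hom := by
  cases n with
  | zero =>
    rw [← ModuleCat.mono_iff_injective]
    have : Mono ((tensorLeft F).map f) := inferInstance
    have e : ((Tor (ModuleCat.{0} R) 0).obj F).map f =
        (tor0 F).hom.app M ≫ (tensorLeft F).map f ≫ (tor0 F).inv.app N := by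
      rw [← NatTrans.naturality_assoc, Iso.hom_inv_id_app, Category.comp_id]
    rw [e]
    infer_instance
  | succ n =>
    have := ModuleCat.subsingleton_of_isZero (tor_flat n F M)
    intro x y _
    exact Subsingleton.elim (α := TT R (n+1) F M) x y

theorem exists_pres {R : Type} [CommRing R] (X : ModuleCat.{0} R) [Module.Finite R X] :
    ∃ S : ShortComplex (ModuleCat.{0} R), S.ShortExact ∧ S.X₃ = X ∧ Module.Flat R S.X₂ ∧
      Module.Finite R S.X₂ := by
  obtain ⟨k, f, hf⟩ := Module.Finite.exists_fin' R X
  exact ⟨f.shortComplexKer, LinearMap.shortExact_shortComplexKer hf, rfl,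
    inferInstanceAs (Module.Flat R (Fin k → R)), inferInstanceAs (Module.Finite R (Fin k → R))⟩

theorem pres_fin {R : Type} [CommRing R] [IsNoetherianRing R] (S : ShortComplex (ModuleCat.{0} R))
    (hS : S.ShortExact) [Module.Finite R S.X₂] : Module.Finite R S.X₁ :=
  Module.Finite.of_injective S.f.hom hS.moduleCat_injective_f

theorem tor_fin {R : Type} [CommRing R] [IsNoetherianRing R] (n : ℕ) :
    ∀ (X N : ModuleCat.{0} R), Module.Finite R X → Module.Finite R N →
      Module.Finite R (TT R n X N) := by
  induction n with
  | zero =>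
    intro X N hX hN
    have : Module.Finite R (TensorProduct R X N) := inferInstance
    exact @Module.Finite.equiv R _ _ _ _ _ _ _ this (((tor0 X).app N).toLinearEquiv.symm)
  | succ n ih =>
    intro X N hX hN
    obtain ⟨S, hS, rfl, hfl, hfin⟩ := exists_pres X
    have := pres_fin S hS
    have := ih S.X₁ N this hN
    exact Module.Finite.of_injective (dT n S hS N).hom (dT_inj n S hS N (tor_flat n S.X₂ N))

theorem tor_ex2 {R : Type} [CommRing R] [IsNoetherianRing R] (n : ℕ) :
    ∀ (X : ModuleCat.{0} R), Module.Finite R X →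
    ∀ (Q : ShortComplex (ModuleCat.{0} R)), Q.ShortExact →
    Function.Exact (((Tor (ModuleCat.{0} R) n).obj X).map Q.f).hom
      (((Tor (ModuleCat.{0} R) n).obj X).map Q.g).hom := by
  induction n with
  | zero =>
    intro X _ Q hQ
    have e : ∀ {M N : ModuleCat.{0} R} (f : M ⟶ N), ((Tor (ModuleCat.{0} R) 0).obj X).map f =
        ((tor0 X).app M).hom ≫ (tensorLeft X).map f ≫ ((tor0 X).app N).inv := by
      intro M N f
      simp only [Iso.app_hom, Iso.app_inv]
      rw [← NatTrans.naturality_assoc, Iso.hom_inv_id_app, Category.comp_id]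
    rw [e, e]
    refine exact_conj _ _ _ _ _ ?_
    exact lTensor_exact X
      ((ShortComplex.ShortExact.moduleCat_exact_iff_function_exact _).mp hQ.exact)
      hQ.moduleCat_surjective_g
  | succ n ih =>
    intro X hX Q hQ
    obtain ⟨S, hS, rfl, hfl, hfin⟩ := exists_pres X
    have ih' := ih S.X₁ (pres_fin S hS) Q hQ
    have nat : ∀ {M N : ModuleCat.{0} R} (f : M ⟶ N) (x : TT R (n + 1) S.X₃ M),
        (((Tor (ModuleCat.{0} R) n).obj S.X₁).map f).hom ((dT n S hS M).hom x) =
        (dT n S hS N).hom ((((Tor (ModuleCat.{0} R) (n + 1)).obj S.X₃).map f).hom x) := by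
      intro M N f x
      exact congrArg (fun q => q.hom x) (dT_nat n S hS f)
    have nat2 : ∀ (y : TT R n S.X₁ Q.X₁),
        (((Tor (ModuleCat.{0} R) n).obj S.X₂).map Q.f).hom
          ((((Tor (ModuleCat.{0} R) n).map S.f).app Q.X₁).hom y) =
        (((Tor (ModuleCat.{0} R) n).map S.f).app Q.X₂).hom
          ((((Tor (ModuleCat.{0} R) n).obj S.X₁).map Q.f).hom y) := by
      intro y
      exact (congrArg (fun q => q.hom y) (((Tor (ModuleCat.{0} R) n).map S.f).naturality Q.f)).symm
    have inj : ∀ N, Function.Injective (dT n S hS N).hom := fun N =>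
      dT_inj n S hS N (tor_flat n S.X₂ N)
    intro b
    constructor
    · intro hb
      have h1 : (((Tor (ModuleCat.{0} R) n).obj S.X₁).map Q.g).hom ((dT n S hS _).hom b) = 0 := by
        rw [nat, hb, map_zero]
      obtain ⟨y, hy⟩ := (ih' _).mp h1
      have hy0 : (((Tor (ModuleCat.{0} R) n).map S.f).app Q.X₁).hom y = 0 := by
        have := hQ.mono_f
        apply tor_flat_inj n S.X₂ Q.f
        rw [nat2, hy, map_zero]
        exact (dT_ex n S hS _).apply_apply_eq_zero b
      obtain ⟨a', rfl⟩ := (dT_ex n S hS _ y).mp hy0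
      refine ⟨a', inj _ ?_⟩
      rw [← hy, nat]
    · rintro ⟨a', rfl⟩
      apply inj
      rw [← nat, ← nat, ih'.apply_apply_eq_zero, map_zero]

theorem half1 {R : Type} [CommRing R] [IsNoetherianRing R] (n : ℕ) (N : ModuleCat.{0} R)
    (hN : Module.Finite R N) : HalfExact R ((Tor (ModuleCat.{0} R) n).flip.obj N) where
  lin r X x := congrArg (fun q => q.hom x) (tor_lin1 n r X N)
  ex S hS := tor_ex1 n N S hS
  fin X hX := tor_fin n X N hX hN

theorem half2 {R : Type} [CommRing R] [IsNoetherianRing R] (n : ℕ) (X : ModuleCat.{0} R)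
    (hX : Module.Finite R X) : HalfExact R ((Tor (ModuleCat.{0} R) n).obj X) where
  lin r N x := congrArg (fun q => q.hom x) (tor_lin2 n r X N)
  ex S hS := tor_ex2 n X hX S hS
  fin N hN := tor_fin n X N hX hN

theorem transport_kill {R : Type} [CommRing R] {A B : ModuleCat.{0} R} (e : A = B) (c : R) :
    (∀ x : A, c • x = 0) ↔ ∀ x : B, c • x = 0 := by
  subst e; rfl

end Helpers

/-- Let `R` be a commutative noetherian local ring of Krull dimension `d`,
`a ∈ R` and `n ∈ ℤ`. If `a · Tor_i(M,N) = 0` for all `n - 2d ≤ i ≤ n` and all finite-length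
modules `M, N`, then `a^(2^(2d)) · Tor_n(M,N) = 0` for all finitely generated `M, N`. -/
theorem stmt3 (R : Type) [CommRing R] [IsNoetherianRing R] [IsLocalRing R]
    (d : ℕ) (hd : ringKrullDim R = (d : WithBot ℕ∞)) (a : R) (n : ℤ)
    (h : ∀ i : ℤ, n - 2 * d ≤ i → i ≤ n → ∀ M N : ModuleCat.{0} R,
        IsFiniteLength R M → IsFiniteLength R N → ∀ x : TorZ R i M N, a • x = 0) :
    ∀ M N : ModuleCat.{0} R, Module.Finite R M → Module.Finite R N →
      ∀ x : TorZ R n M N, (a ^ (2 ^ (2 * d))) • x = 0 := by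
  intro M N hM hN
  by_cases hn : 0 ≤ n
  · obtain ⟨m, rfl⟩ := Int.eq_ofNat_of_zero_le hn
    have hTor : ∀ M N : ModuleCat.{0} R, TorZ R (m : ℤ) M N = TT R m M N := by
      intro M N
      simp only [TorZ, TorMod, Int.natCast_nonneg, if_true, Int.toNat_natCast]
    rw [transport_kill (hTor M N)]
    have hdim : ∀ X : ModuleCat.{0} R, Module.supportDim R X < ((d + 1 : ℕ) : WithBot ℕ∞) := by
      intro X
      refine lt_of_le_of_lt (Module.supportDim_le_ringKrullDim R X) ?_
      rw [hd]
      exact_mod_cast Nat.lt_succ_self d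
    have h0 : ∀ M N : ModuleCat.{0} R, IsFiniteLength R M → IsFiniteLength R N →
        ∀ x : TT R m M N, a • x = 0 := by
      intro M N hM hN
      rw [← transport_kill (hTor M N)]
      exact h m (by omega) le_rfl M N hM hN
    have h1 : ∀ M N : ModuleCat.{0} R, Module.Finite R M → IsFiniteLength R N →
        ∀ x : TT R m M N, a ^ (d + 1) • x = 0 := by
      intro M N hM hN
      have hNn : IsNoetherian R N := (isFiniteLength_iff_isNoetherian_isArtinian.mp hN).1
      exact aux_main_s3 R _ (half1 m N inferInstance) a (fun M hM x => h0 M N hM hN x) (d + 1) M hM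
        (hdim M)
    have h2 : ∀ x : TT R m M N, (a ^ (d + 1)) ^ (d + 1) • x = 0 :=
      aux_main_s3 R _ (half2 m M hM) (a ^ (d + 1)) (fun N hN x => h1 M N hM hN x) (d + 1) N hN
        (hdim N)
    intro x
    have hle : (d + 1) * (d + 1) ≤ 2 ^ (2 * d) := by
      have : d + 1 ≤ 2 ^ d := Nat.lt_two_pow_self
      rw [two_mul, pow_add]
      exact Nat.mul_le_mul this this
    obtain ⟨k, hk⟩ := Nat.exists_eq_add_of_le' hle
    rw [hk, pow_add, mul_smul, pow_mul, h2 x, smul_zero]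
  · have e : TorZ R n M N = ModuleCat.of R PUnit := by
      simp [TorZ, hn]
    rw [transport_kill e]
    intro x
    exact Subsingleton.elim (α := PUnit) _ _


end
end

section
/- Let R be a commutative noetherian local ring of Krull dimension d, let a be an element of R and n an integer. Suppose that a·Ext_R^i(M,N) = 0 for all integers i with n ≤ i ≤ n+2d and all finitely generated R-modules M and N of finite length. Then a^{2^{2d}}·Ext_R^n(M,N) = 0 for all finitely generated R-modules M and N. -/
open CategoryTheory IsLocalRing

noncomputable section

def Kil {R : Type} [CommRing R] (a : R) (M N : ModuleCat.{0} R) (i : ℕ) : Prop :=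
  ∀ x : Abelian.Ext M N i, a • x = 0

def Cls {R : Type} [CommRing R] (l : List R) (M : ModuleCat.{0} R) : Prop :=
  Module.Finite R M ∧ ∀ x ∈ l, ∃ k : ℕ, ∀ m : M, x ^ k • m = 0

section
variable {R : Type} [CommRing R]

lemma Cls.sub [IsNoetherianRing R] {l : List R} {M : ModuleCat.{0} R} (h : Cls l M)
    (P : Submodule R M) : Cls l (ModuleCat.of R P) := by
  obtain ⟨h1, h2⟩ := h
  refine ⟨(inferInstance : Module.Finite R P), fun x hx => ?_⟩
  obtain ⟨k, hk⟩ := h2 x hx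
  exact ⟨k, fun m => Subtype.ext (hk m.1)⟩

lemma Cls.quot {l : List R} {M : ModuleCat.{0} R} (h : Cls l M)
    (P : Submodule R M) : Cls l (ModuleCat.of R (M ⧸ P)) := by
  obtain ⟨h1, h2⟩ := h
  refine ⟨(inferInstance : Module.Finite R (M ⧸ P)), fun x hx => ?_⟩
  obtain ⟨k, hk⟩ := h2 x hx
  refine ⟨k, fun m => ?_⟩
  obtain ⟨m, rfl⟩ := Submodule.Quotient.mk_surjective P m
  change Submodule.Quotient.mk (x ^ k • m) = 0
  rw [hk]; rfl

lemma Cls.cons {l : List R} {M : ModuleCat.{0} R} (h : Cls l M) (x : R) (k : ℕ)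
    (hk : ∀ m : M, x ^ k • m = 0) : Cls (x :: l) M := by
  refine ⟨h.1, fun y hy => ?_⟩
  rcases List.mem_cons.1 hy with rfl | hy
  · exact ⟨k, hk⟩
  · exact h.2 y hy

lemma exists_gamma [IsNoetherianRing R] (M : ModuleCat.{0} R) [Module.Finite R M] (x : R) :
    ∃ k : ℕ, IsSMulRegular (M ⧸ Submodule.torsionBy R M (x ^ k)) x := by
  obtain ⟨k, hk⟩ := monotone_stabilizes_iff_noetherian.2 (inferInstance : IsNoetherian R M)
    ⟨fun k => Submodule.torsionBy R M (x ^ k), by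
      refine monotone_nat_of_le_succ fun n m hm => ?_
      rw [Submodule.mem_torsionBy_iff] at hm ⊢
      rw [pow_succ', mul_smul, hm, smul_zero]⟩
  refine ⟨k, (isSMulRegular_iff_right_eq_zero_of_smul (M := M ⧸ Submodule.torsionBy R M (x ^ k))
    (r := x)).2 fun m hm => ?_⟩
  obtain ⟨m, rfl⟩ := Submodule.Quotient.mk_surjective _ m
  rw [← Submodule.Quotient.mk_smul, Submodule.Quotient.mk_eq_zero,
    Submodule.mem_torsionBy_iff, smul_smul, ← pow_succ] at hm
  rw [Submodule.Quotient.mk_eq_zero]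
  have := hk (k + 1) (by omega)
  simp only [OrderHom.coe_mk] at this
  rw [this]
  exact hm

lemma krull [IsNoetherianRing R] [IsLocalRing R] {E : Type} [AddCommGroup E] [Module R E]
    [Module.Finite R E] {x : R} (hx : x ∈ maximalIdeal R) (e : E)
    (h : ∀ k : ℕ, ∃ y : E, x ^ k • y = e) : e = 0 := by
  have := Ideal.iInf_pow_smul_eq_bot_of_isLocalRing (M := E) (maximalIdeal R)
    (Ideal.IsPrime.ne_top inferInstance)
  rw [← Submodule.mem_bot R, ← this, Submodule.mem_iInf]
  intro k
  obtain ⟨y, rfl⟩ := h k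
  exact Submodule.smul_mem_smul (Ideal.pow_mem_pow hx k) trivial

open Abelian

lemma quot_kill (M : ModuleCat.{0} R) (r : R) :
    ∀ m : M ⧸ LinearMap.range (LinearMap.lsmul R M r), r • m = 0 := by
  intro m
  obtain ⟨m, rfl⟩ := Submodule.Quotient.mk_surjective _ m
  rw [← Submodule.Quotient.mk_smul, Submodule.Quotient.mk_eq_zero]
  exact ⟨m, rfl⟩

lemma ses_reg (M : ModuleCat.{0} R) (r : R) (hr : IsSMulRegular M r) :
    ∃ (g : M ⟶ ModuleCat.of R (M ⧸ LinearMap.range (LinearMap.lsmul R M r)))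
      (w : (r • 𝟙 M) ≫ g = 0), (ShortComplex.mk (r • 𝟙 M) g w).ShortExact := by
  have hr' : ∀ m : M, (LinearMap.range (LinearMap.lsmul R M r)).mkQ (r • m) = 0 := fun m => by
    rw [Submodule.mkQ_apply, Submodule.Quotient.mk_eq_zero]
    exact ⟨m, rfl⟩
  refine ⟨ModuleCat.ofHom (Submodule.mkQ _), ?_, ?_⟩
  · ext m
    exact hr' m
  · apply ModuleCat.shortComplex_shortExact
    · intro y
      change (LinearMap.range (LinearMap.lsmul R M r)).mkQ y = 0 ↔ _
      rw [Submodule.mkQ_apply, Submodule.Quotient.mk_eq_zero]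
      exact Iff.rfl
    · exact hr
    · exact Submodule.mkQ_surjective _

lemma stepM_reg [IsNoetherianRing R] [IsLocalRing R] {x : R} (hx : x ∈ maximalIdeal R) (a : R)
    (l : List R) (N : ModuleCat.{0} R) [Module.Finite R N] (i : ℕ)
    (h : ∀ M, Cls (x :: l) M → Kil a M N (i + 1))
    (M : ModuleCat.{0} R) (hM : Cls l M) (hreg : IsSMulRegular M x) : Kil a M N i := by
  intro e
  have := hM.1
  refine krull hx _ fun k => ?_
  obtain ⟨g, w, hS⟩ := ses_reg M (x ^ k) (hreg.pow k)
  have hc := Cls.cons (hM.quot _) x k (quot_kill M (x ^ k))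
  have h0 := h _ hc (hS.extClass.comp e (add_comm 1 i))
  have h0' : hS.extClass.comp (a • e) (add_comm 1 i) = 0 := by
    rw [Ext.comp_smul]; exact h0
  obtain ⟨y, hy⟩ := Ext.contravariant_sequence_exact₁ hS N (a • e) (add_comm 1 i) h0'
  change Abelian.Ext M N i at y
  change (Ext.mk₀ (x ^ k • 𝟙 M)).comp y _ = a • e at hy
  refine ⟨y, ?_⟩
  rw [← hy, Ext.mk₀_smul, Ext.smul_comp, Ext.mk₀_id_comp]

lemma stepN_reg [IsNoetherianRing R] [IsLocalRing R] {x : R} (hx : x ∈ maximalIdeal R) (a : R)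
    (l : List R) (M : ModuleCat.{0} R) [Module.Finite R M] (i : ℕ)
    (h : ∀ N, Cls (x :: l) N → Kil a M N i)
    (N : ModuleCat.{0} R) (hN : Cls l N) (hreg : IsSMulRegular N x) : Kil a M N i := by
  intro e
  have := hN.1
  refine krull hx _ fun k => ?_
  obtain ⟨g, w, hS⟩ := ses_reg N (x ^ k) (hreg.pow k)
  have hc := Cls.cons (hN.quot _) x k (quot_kill N (x ^ k))
  have h0 := h _ hc (e.comp (Ext.mk₀ g) (add_zero i))
  rw [← Ext.smul_comp] at h0
  obtain ⟨y, hy⟩ := Ext.covariant_sequence_exact₂ M hS (a • e) h0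
  change Abelian.Ext M N i at y
  change y.comp (Ext.mk₀ (x ^ k • 𝟙 N)) _ = a • e at hy
  refine ⟨y, ?_⟩
  rw [← hy, Ext.mk₀_smul, Ext.comp_smul, Ext.comp_mk₀_id]

lemma ses_sub (M : ModuleCat.{0} R) (P : Submodule R M) :
    ∃ (f : ModuleCat.of R P ⟶ M) (g : M ⟶ ModuleCat.of R (M ⧸ P)) (w : f ≫ g = 0),
      (ShortComplex.mk f g w).ShortExact := by
  refine ⟨ModuleCat.ofHom P.subtype, ModuleCat.ofHom P.mkQ, by ext; simp, ?_⟩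
  apply ModuleCat.shortComplex_shortExact
  · intro y
    simp
  · exact P.injective_subtype
  · exact P.mkQ_surjective

lemma stepM [IsNoetherianRing R] [IsLocalRing R] {x : R} (hx : x ∈ maximalIdeal R) (a : R)
    (l : List R) (N : ModuleCat.{0} R) [Module.Finite R N] (i : ℕ)
    (h : ∀ M, Cls (x :: l) M → Kil a M N i)
    (h' : ∀ M, Cls (x :: l) M → Kil a M N (i + 1))
    (M : ModuleCat.{0} R) (hM : Cls l M) : Kil (a ^ 2) M N i := by
  intro e
  have := hM.1
  obtain ⟨k, hk⟩ := exists_gamma M x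
  obtain ⟨f, g, w, hS⟩ := ses_sub M (Submodule.torsionBy R M (x ^ k))
  have h1 := h _ (Cls.cons (hM.sub (Submodule.torsionBy R M (x ^ k))) x k
    fun m => Subtype.ext ((Submodule.mem_torsionBy_iff _ _).1 m.2))
    ((Ext.mk₀ f).comp e (zero_add i))
  rw [← Ext.comp_smul] at h1
  obtain ⟨y, hy⟩ := Ext.contravariant_sequence_exact₂ hS N (a • e) h1
  have h2 := stepM_reg hx a l N i h' _ (hM.quot _) hk y
  rw [pow_two, mul_smul, ← hy, ← Ext.comp_smul]
  change (Ext.mk₀ g).comp (a • y) _ = 0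
  rw [h2, Ext.comp_zero]

lemma stepN [IsNoetherianRing R] [IsLocalRing R] {x : R} (hx : x ∈ maximalIdeal R) (a : R)
    (l : List R) (M : ModuleCat.{0} R) [Module.Finite R M] (i : ℕ)
    (h : ∀ N, Cls (x :: l) N → Kil a M N i)
    (N : ModuleCat.{0} R) (hN : Cls l N) : Kil (a ^ 2) M N i := by
  intro e
  have := hN.1
  obtain ⟨k, hk⟩ := exists_gamma N x
  obtain ⟨f, g, w, hS⟩ := ses_sub N (Submodule.torsionBy R N (x ^ k))
  have h1 := stepN_reg hx a l M i h _ (hN.quot _) hk (e.comp (Ext.mk₀ g) (add_zero i))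
  rw [← Ext.smul_comp] at h1
  obtain ⟨y, hy⟩ := Ext.covariant_sequence_exact₂ M hS (a • e) h1
  have h2 := h _ (Cls.cons (hN.sub (Submodule.torsionBy R N (x ^ k))) x k
    fun m => Subtype.ext ((Submodule.mem_torsionBy_iff _ _).1 m.2)) y
  rw [pow_two, mul_smul, ← hy, ← Ext.smul_comp]
  change (a • y).comp (Ext.mk₀ f) _ = 0
  rw [h2, Ext.zero_comp]

lemma allM [IsNoetherianRing R] [IsLocalRing R] (N : ModuleCat.{0} R) [Module.Finite R N] (i : ℕ)
    (l : List R) (hl : ∀ x ∈ l, x ∈ maximalIdeal R) (a : R)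
    (h : ∀ j, i ≤ j → j ≤ i + l.length → ∀ M, Cls l M → Kil a M N j)
    (M : ModuleCat.{0} R) (hM : Module.Finite R M) : Kil (a ^ 2 ^ l.length) M N i := by
  induction l generalizing a with
  | nil =>
    have := h i le_rfl (by simp) M ⟨hM, fun _ hx => (List.not_mem_nil hx).elim⟩
    rwa [List.length_nil, pow_zero, pow_one]
  | cons x l ih =>
    have := ih (fun y hy => hl y (List.mem_cons_of_mem _ hy)) (a ^ 2) fun j hj hj' M hM =>
      stepM (hl x List.mem_cons_self) a l N j
        (h j hj (by simp only [List.length_cons]; omega))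
        (h (j + 1) (by omega) (by simp only [List.length_cons]; omega)) M hM
    rwa [← pow_mul, ← pow_succ'] at this

lemma allN [IsNoetherianRing R] [IsLocalRing R] (M : ModuleCat.{0} R) [Module.Finite R M] (i : ℕ)
    (l : List R) (hl : ∀ x ∈ l, x ∈ maximalIdeal R) (a : R)
    (h : ∀ N, Cls l N → Kil a M N i)
    (N : ModuleCat.{0} R) (hN : Module.Finite R N) : Kil (a ^ 2 ^ l.length) M N i := by
  induction l generalizing a with
  | nil =>
    have := h N ⟨hN, fun _ hx => (List.not_mem_nil hx).elim⟩
    rwa [List.length_nil, pow_zero, pow_one]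
  | cons x l ih =>
    have := ih (fun y hy => hl y (List.mem_cons_of_mem _ hy)) (a ^ 2) fun N hN =>
      stepN (hl x List.mem_cons_self) a l M i h N hN
    rwa [← pow_mul, ← pow_succ'] at this

lemma finLen [IsNoetherianRing R] [IsLocalRing R] (l : List R)
    (hl : maximalIdeal R ∈ (Ideal.span {x | x ∈ l}).minimalPrimes)
    (M : ModuleCat.{0} R) (hM : Cls l M) : IsFiniteLength R M := by
  have := hM.1
  rw [isFiniteLength_iff_isNoetherian_isArtinian]
  refine ⟨inferInstance, ?_⟩
  set A := Module.annihilator R M with hA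
  have hdim : Ring.KrullDimLE 0 (R ⧸ A) := by
    refine Ring.KrullDimLE.mk₀ fun P hP => ?_
    have hle : Ideal.span {x | x ∈ l} ≤ P.comap (Ideal.Quotient.mk A) := by
      rw [Ideal.span_le]
      intro x hx
      obtain ⟨k, hk⟩ := hM.2 x hx
      have : x ^ k ∈ A := Module.mem_annihilator.2 hk
      refine Ideal.IsPrime.mem_of_pow_mem (I := P.comap (Ideal.Quotient.mk A)) inferInstance k ?_
      rw [Ideal.mem_comap, Ideal.Quotient.eq_zero_iff_mem.2 this]
      exact P.zero_mem
    have h2 := hl.2 ⟨inferInstance, hle⟩ (le_maximalIdeal (Ideal.IsPrime.ne_top inferInstance))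
    have h3 : (P.comap (Ideal.Quotient.mk A)).IsMaximal := by
      rw [le_antisymm (le_maximalIdeal (Ideal.IsPrime.ne_top inferInstance)) h2]
      infer_instance
    have := Ideal.map_eq_top_or_isMaximal_of_surjective (Ideal.Quotient.mk A)
      Ideal.Quotient.mk_surjective h3
    rw [Ideal.map_comap_of_surjective _ Ideal.Quotient.mk_surjective] at this
    exact this.resolve_left hP.ne_top
  have : IsArtinianRing (R ⧸ A) := IsNoetherianRing.isArtinianRing_of_krullDimLE_zero
  let _ : Module (R ⧸ A) M := Module.quotientAnnihilator
  have : IsScalarTower R (R ⧸ A) M := inferInstance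
  have : Module.Finite (R ⧸ A) M := Module.Finite.of_restrictScalars_finite R _ _
  have : IsArtinian (R ⧸ A) M := inferInstance
  exact isArtinian_of_surjective_algebraMap (S := R) (R := R ⧸ A) Ideal.Quotient.mk_surjective

lemma hom_kill (S : ShortComplex (ModuleCat.{0} R)) (a : R) :
    (∀ x : S.homology, a • x = 0) ↔ ∀ z : S.X₂, S.g z = 0 → ∃ y, S.f y = a • z := by
  let e := S.moduleCatHomologyIso.toLinearEquiv
  have key : (∀ x : S.homology, a • x = 0) ↔
      ∀ x : (LinearMap.ker S.g.hom ⧸ LinearMap.range S.moduleCatToCycles), a • x = 0 := by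
    constructor
    · intro h x
      have := h (e.symm x)
      apply e.symm.injective
      exact ((e.symm.map_smul a x).trans this).trans e.symm.map_zero.symm
    · intro h x
      have := h (e x)
      apply e.injective
      exact ((e.map_smul a x).trans this).trans e.map_zero.symm
  rw [key]
  constructor
  · intro h z hz
    have := h (Submodule.Quotient.mk ⟨z, hz⟩)
    rw [← Submodule.Quotient.mk_smul, Submodule.Quotient.mk_eq_zero] at this
    obtain ⟨y, hy⟩ := this
    exact ⟨y, congrArg Subtype.val hy⟩
  · intro h x
    obtain ⟨⟨z, hz⟩, rfl⟩ := Submodule.Quotient.mk_surjective _ x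
    obtain ⟨y, hy⟩ := h z hz
    rw [← Submodule.Quotient.mk_smul, Submodule.Quotient.mk_eq_zero]
    exact ⟨y, Subtype.ext hy⟩

lemma old_kill (M N : ModuleCat.{0} R) (P : ProjectiveResolution M) (n : ℕ) (a : R) :
    (∀ x : ExtMod R n M N, a • x = 0) ↔
      ∀ f : P.complex.X n ⟶ N, P.complex.d (n + 1) n ≫ f = 0 →
        ∃ g : P.complex.X ((ComplexShape.up ℕ).prev n) ⟶ N,
          P.complex.d n ((ComplexShape.up ℕ).prev n) ≫ g = a • f := by
  let e := (P.isoExt (R := R) n N).toLinearEquiv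
  have key : (∀ x : ExtMod R n M N, a • x = 0) ↔
      ∀ x : (P.complex.linearYonedaObj R N).homology n, a • x = 0 := by
    constructor
    · intro h x
      have := h (e.symm x)
      apply e.symm.injective
      rw [map_smul, map_zero]; exact this
    · intro h x
      have := h (e x)
      apply e.injective
      exact ((e.map_smul a x).trans this).trans e.map_zero.symm
  rw [key]
  refine (hom_kill ((P.complex.linearYonedaObj R N).sc' ((ComplexShape.up ℕ).prev n) n ((ComplexShape.up ℕ).next n)) a).trans ?_
  have : (ComplexShape.up ℕ).next n = n + 1 := by simp
  rw [this]
  exact Iff.rfl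

lemma new_kill (M N : ModuleCat.{0} R) (P : ProjectiveResolution M) (n : ℕ) (a : R) :
    Kil a M N n ↔
      ∀ f : P.complex.X n ⟶ N, P.complex.d (n + 1) n ≫ f = 0 →
        ∃ g : P.complex.X ((ComplexShape.up ℕ).prev n) ⟶ N,
          P.complex.d n ((ComplexShape.up ℕ).prev n) ≫ g = a • f := by
  rcases n with _ | n
  · have h0 : P.complex.d 0 ((ComplexShape.up ℕ).prev 0) = 0 :=
      P.complex.shape _ _ (by simp)
    simp only [h0, Limits.zero_comp]
    let π : P.complex.X 0 ⟶ M := P.π.f 0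
    have hπ : P.complex.d (0 + 1) 0 ≫ π = 0 := P.complex_d_comp_π_f_zero
    have hepi : Epi π := inferInstanceAs (Epi (P.π.f 0))
    have hdesc : ∀ f : P.complex.X 0 ⟶ N, P.complex.d (0 + 1) 0 ≫ f = 0 →
        ∃ g : M ⟶ N, π ≫ g = f := fun f hf => ⟨P.exact₀.desc f hf, P.exact₀.g_desc f hf⟩
    constructor
    · intro h f hf
      refine ⟨0, ?_⟩
      obtain ⟨g, rfl⟩ := hdesc f hf
      have := h (Ext.mk₀ g)
      rw [← Ext.mk₀_smul] at this
      have h3 : a • g = 0 := by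
        apply (Ext.mk₀_bijective _ _).1
        rw [this, Ext.mk₀_zero]
      rw [← Linear.comp_smul, h3, Limits.comp_zero]
    · intro h x
      obtain ⟨g, rfl⟩ := (Ext.mk₀_bijective _ _).2 x
      obtain ⟨_, h1⟩ := h (π ≫ g) (by rw [← Category.assoc, hπ, Limits.zero_comp])
      rw [← Ext.mk₀_smul]
      have : a • g = 0 := by
        rw [← cancel_epi π, Linear.comp_smul, ← h1, Limits.comp_zero]
      rw [this, Ext.mk₀_zero]
  · have hp : (ComplexShape.up ℕ).prev (n + 1) = n := by simp
    rw [hp]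
    have hs : ∀ (f : P.complex.X (n+1) ⟶ N) (hf : P.complex.d (n + 1 + 1) (n + 1) ≫ f = 0),
        a • P.extMk f _ rfl hf = P.extMk (a • f) _ rfl (by rw [Linear.comp_smul, hf, smul_zero]) := by
      intro f hf
      rw [Ext.smul_eq_comp_mk₀, P.extMk_comp_mk₀]
      simp only [Linear.comp_smul, Category.comp_id]
    constructor
    · intro h f hf
      have := h (P.extMk f _ rfl hf)
      rw [hs] at this
      exact (P.extMk_eq_zero_iff _ _ _ _ n rfl).1 this
    · intro h x
      obtain ⟨f, hf, rfl⟩ := P.extMk_surjective x _ rfl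
      rw [hs]
      exact (P.extMk_eq_zero_iff _ _ _ _ n rfl).2 (h f hf)

lemma kil_iff (M N : ModuleCat.{0} R) (n : ℕ) (a : R) :
    Kil a M N n ↔ ∀ x : ExtMod R n M N, a • x = 0 := by
  let P := projectiveResolution M
  rw [old_kill M N P, new_kill M N P]

end

/-- Let `R` be a commutative noetherian local ring of Krull dimension `d`,
`a ∈ R` and `n ∈ ℤ`. If `a · Ext^i(M,N) = 0` for all `n ≤ i ≤ n + 2d` and all finite-length
modules `M, N`, then `a^(2^(2d)) · Ext^n(M,N) = 0` for all finitely generated `M, N`. -/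
theorem stmt4 (R : Type) [CommRing R] [IsNoetherianRing R] [IsLocalRing R]
    (d : ℕ) (hd : ringKrullDim R = (d : WithBot ℕ∞)) (a : R) (n : ℤ)
    (h : ∀ i : ℤ, n ≤ i → i ≤ n + 2 * d → ∀ M N : ModuleCat.{0} R,
        IsFiniteLength R M → IsFiniteLength R N → ∀ x : ExtZ R i M N, a • x = 0) :
    ∀ M N : ModuleCat.{0} R, Module.Finite R M → Module.Finite R N →
      ∀ x : ExtZ R n M N, (a ^ (2 ^ (2 * d))) • x = 0 := by
  intro M N hM hN
  by_cases hn : 0 ≤ n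
  · lift n to ℕ using hn
    have hz : ∀ (i : ℕ) (b : R) (M N : ModuleCat.{0} R),
        Kil b M N i ↔ ∀ x : ExtZ R i M N, b • x = 0 := by
      intro i b M N
      rw [kil_iff]
      have : ExtZ R i M N = ExtMod R i M N := by
        simp [ExtZ]
      rw [this]
    rw [← hz]
    obtain ⟨s, hs, hcard⟩ :=
      Ideal.exists_finset_card_eq_height_of_isNoetherianRing (maximalIdeal R)
    have hc : s.card = d := by
      have h1 := IsLocalRing.maximalIdeal_height_eq_ringKrullDim (R := R)
      rw [hd, ← hcard] at h1
      exact_mod_cast h1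
    have hl : s.toList.length = d := by rw [Finset.length_toList, hc]
    have hset : {x | x ∈ s.toList} = (s : Set R) := by ext; simp
    have hmem : ∀ x ∈ s.toList, x ∈ maximalIdeal R := fun x hx =>
      hs.1.2 (Ideal.subset_span (by simpa using hx))
    rw [← hset] at hs
    have key := allN M n s.toList hmem (a ^ 2 ^ d) (fun N' hN' => by
      have := hN'.1
      have := allM N' n s.toList hmem a (fun j hj hj' M' hM' => by
        rw [hz]
        exact h j (by omega) (by omega) M' N' (finLen _ hs _ hM') (finLen _ hs _ hN')) M hM
      rwa [hl] at this) N hN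
    rwa [hl, ← pow_mul, ← pow_add, ← two_mul] at key
  · intro x
    have : ExtZ R n M N = ModuleCat.of R PUnit := by
      rw [ExtZ, if_neg hn]
    have hs : Subsingleton (ExtZ R n M N) := by
      rw [this]
      exact inferInstanceAs (Subsingleton PUnit)
    exact Subsingleton.elim _ _
end
end
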